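/- arXiv:1511.07687 — 6 statements merged into one kernel-verified Lean document; each statement's English description precedes it below -/
import Mathlib

section
/- Existence of the Luenberger transformation (Theorem 1). Let Θ ⊂ R^q, let A: Θ → R^{n×n}, B: Θ → R^{n×1}, C: Θ → R^{1×n} be maps, and let λ_1, …, λ_r be negative real numbers such that λ_i is not an eigenvalue of A(θ) for every θ ∈ Θ and every i = 1,…,r. Then for every θ ∈ Θ, x ∈ R^n, w = (w_1,…,w_r) ∈ R^r and u ∈ R, each component T_i satisfies M_i(θ)(A(θ)x + B(θ)u) − M_i(θ)B(θ)(λ_i w_i + u) = λ_i T_i(x, θ, w_i) + C(θ)x; equivalently, since T is linear in (x,w), T solves the PDE (∂T/∂x)(x,θ,w)·(A(θ)x + B(θ)u) + (∂T/∂w)(x,θ,w)·(Λw + 1_r u) = Λ T(x, θ, w) + 1_r C(θ)x, where Λ = diag(λ_1,…,λ_r) and 1_r is the all-ones vector in R^r. -/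
open scoped Matrix BigOperators

section Luenberger

variable {R n : Type*} [CommRing R] [Fintype n]

theorem dotProduct_dynamics_of_vecMul_eq {A : Matrix n n R} {m c : n → R} {μ : R}
    (h : m ᵥ* A = μ • m + c) (b x : n → R) (w u : R) :
    m ⬝ᵥ (A *ᵥ x + u • b) - (m ⬝ᵥ b) * (μ * w + u) = μ * (m ⬝ᵥ (x - w • b)) + c ⬝ᵥ x := by
  have hAx : m ⬝ᵥ (A *ᵥ x) = μ * (m ⬝ᵥ x) + c ⬝ᵥ x := by
    rw [Matrix.dotProduct_mulVec, h, add_dotProduct, smul_dotProduct, smul_eq_mul]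
  calc m ⬝ᵥ (A *ᵥ x + u • b) - (m ⬝ᵥ b) * (μ * w + u)
      = m ⬝ᵥ (A *ᵥ x) - μ * (w * (m ⬝ᵥ b)) := by
        rw [dotProduct_add, dotProduct_smul, smul_eq_mul]
        ring
    _ = μ * (m ⬝ᵥ x - w * (m ⬝ᵥ b)) + c ⬝ᵥ x := by
        rw [hAx]
        ring
    _ = μ * (m ⬝ᵥ (x - w • b)) + c ⬝ᵥ x := by
        rw [dotProduct_sub, dotProduct_smul, smul_eq_mul]

variable [DecidableEq n]

/-- The row `M = C (A - μ I)⁻¹` of the Luenberger transformation attached to the observer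
eigenvalue `μ`, at a fixed parameter. The inverse is `0` when `det (A - μ I)` is not a unit. -/
noncomputable def luenbergerRow (A : Matrix n n R) (c : n → R) (μ : R) : n → R :=
  c ᵥ* (A - μ • (1 : Matrix n n R))⁻¹

/-- The component `T (x, w) = M (x - B w)` of the Luenberger transformation attached to the
observer eigenvalue `μ`, at a fixed parameter. -/
noncomputable def luenbergerComponent (A : Matrix n n R) (b c : n → R) (μ : R)
    (x : n → R) (w : R) : R :=
  luenbergerRow A c μ ⬝ᵥ (x - w • b)

theorem luenbergerRow_vecMul {A : Matrix n n R} {μ : R}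
    (hμ : IsUnit (A - μ • (1 : Matrix n n R)).det) (c : n → R) :
    luenbergerRow A c μ ᵥ* A = μ • luenbergerRow A c μ + c := by
  have hinv : luenbergerRow A c μ ᵥ* (A - μ • (1 : Matrix n n R)) = c := by
    rw [luenbergerRow, Matrix.vecMul_vecMul, Matrix.nonsing_inv_mul _ hμ, Matrix.vecMul_one]
  rwa [Matrix.vecMul_sub, Matrix.vecMul_smul, Matrix.vecMul_one, sub_eq_iff_eq_add'] at hinv

theorem luenberger_transformation_exists_general {A : Matrix n n R} {μ : R}
    (hμ : IsUnit (A - μ • (1 : Matrix n n R)).det) (b c x : n → R) (w u : R) :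
    luenbergerRow A c μ ⬝ᵥ (A *ᵥ x + u • b) - (luenbergerRow A c μ ⬝ᵥ b) * (μ * w + u)
      = μ * luenbergerComponent A b c μ x w + c ⬝ᵥ x :=
  dotProduct_dynamics_of_vecMul_eq (luenbergerRow_vecMul hμ c) b x w u

end Luenberger

/-- Theorem 1, existence of the Luenberger transformation.
Given maps `A : Θ → ℝ^{n×n}`, `B : Θ → ℝ^n` (column), `C : Θ → ℝ^n` (row) and negative
reals `λ 1, …, λ r` none of which is an eigenvalue of `A θ` for `θ ∈ Θ`, the map
`T i (x, θ, w i) = M i θ ⬝ (x − w i • B θ)` with `M i θ = C θ (A θ − λ i I)⁻¹`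
satisfies, componentwise, the PDE
`M i θ ⬝ (A θ x + u B θ) − (M i θ ⬝ B θ) (λ i w i + u) = λ i ⬝ T i + C θ ⬝ x`. -/
theorem luenberger_transformation_exists
    (n q r : ℕ) (Θ : Set (Fin q → ℝ))
    (A : (Fin q → ℝ) → Matrix (Fin n) (Fin n) ℝ)
    (B : (Fin q → ℝ) → (Fin n → ℝ))
    (C : (Fin q → ℝ) → (Fin n → ℝ))
    (lam : Fin r → ℝ)
    (hneg : ∀ i, lam i < 0)
    (heig : ∀ i, ∀ θ ∈ Θ, IsUnit (A θ - lam i • (1 : Matrix (Fin n) (Fin n) ℝ)).det)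
    -- the transformation and its components
    (M : Fin r → (Fin q → ℝ) → (Fin n → ℝ))
    (hM : ∀ i θ, M i θ = Matrix.vecMul (C θ) (A θ - lam i • (1 : Matrix (Fin n) (Fin n) ℝ))⁻¹)
    (T : (Fin n → ℝ) → (Fin q → ℝ) → (Fin r → ℝ) → (Fin r → ℝ))
    (hT : ∀ x θ w i, T x θ w i = M i θ ⬝ᵥ (x - w i • B θ)) :
    ∀ θ ∈ Θ, ∀ (x : Fin n → ℝ) (w : Fin r → ℝ) (u : ℝ) (i : Fin r),
      M i θ ⬝ᵥ (A θ *ᵥ x + u • B θ) - (M i θ ⬝ᵥ B θ) * (lam i * w i + u)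
        = lam i * T x θ w i + C θ ⬝ᵥ x := by
  intro θ hθ x w u i
  rw [hT, hM]
  exact luenberger_transformation_exists_general (heig i θ hθ) (B θ) (C θ) x (w i) u
end

section
/- Injectivity of T for high-gain eigenvalues (Theorem 2). Assume: C_x ⊂ R^n and C_θ are bounded open sets with closure of C_θ contained in Θ; there are an integer r, a bounded set U_r ⊂ R^{r−1} and a constant L_𝓗 > 0 such that |𝓗_r(x*,θ*,v) − 𝓗_r(x,θ,v)| ≥ L_𝓗 |(x−x*, θ−θ*)| for all (x,θ), (x*,θ*) ∈ Cl(C_x)×Cl(C_θ) and all v ∈ U_r. Let u: [0,∞) → R be of class C^{r−1} with |ū^{(r−1)}(t)| ≤ 𝔲 for all t ≥ 0 and some 𝔲 > 0. Then for every r-tuple of distinct negative reals (λ̃_1, …, λ̃_r), every τ > 0 and every w_0 ∈ R^r, there exist k* > 0 and L̄_T > 0 such that for all k > k*: setting λ_i = k λ̃_i (which for k > k* are not eigenvalues of A(θ) for θ ∈ Cl(C_θ)) and letting w: [0,∞) → R^r be the solution of ẇ_i(t) = λ_i w_i(t) + u(t) with w(0) = w_0, one has for every t_1 ≥ τ with ū^{(r−2)}(t_1)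 ∈ U_r and all (x,θ), (x*,θ*) ∈ C_x×C_θ: |T(x,θ,w(t_1)) − T(x*,θ*,w(t_1))| ≥ (L̄_T / k^r) |(x−x*, θ−θ*)|. -/
open scoped Matrix BigOperators

attribute [local instance] Matrix.normedAddCommGroup Matrix.normedSpace

/-- The Euclidean norm of a vector in `ℝ^m`. -/
noncomputable def eNorm {m : ℕ} (x : Fin m → ℝ) : ℝ := Real.sqrt (∑ i, (x i) ^ 2)

/-- Euclidean norm of the concatenation of two vectors. -/
noncomputable def cNorm {m p : ℕ} (a : Fin m → ℝ) (b : Fin p → ℝ) : ℝ :=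
  Real.sqrt (∑ i, (a i) ^ 2 + ∑ j, (b j) ^ 2)

/-- The down-shift matrix `S ∈ ℝ^{r×r}` : `(S s)₁ = 0`, `(S s)ᵢ = s_{i−1}`. -/
def shiftMat (r : ℕ) : Matrix (Fin r) (Fin r) ℝ :=
  fun i j => if (i : ℕ) = (j : ℕ) + 1 then 1 else 0

/-- `H_r(θ)` : the `r × n` matrix stacking the rows `C(θ) A(θ)^{j-1}`, `j = 1,…,r`. -/
def obsMat (n q r : ℕ) (A : (Fin q → ℝ) → Matrix (Fin n) (Fin n) ℝ)
    (C : (Fin q → ℝ) → (Fin n → ℝ)) (θ : Fin q → ℝ) : Matrix (Fin r) (Fin n) ℝ :=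
  fun j => Matrix.vecMul (C θ) (A θ ^ (j : ℕ))

/-- `𝓗_r(x, θ, v) = H_r(θ) x + Σ_{j=1}^{r−1} S^j H_r(θ) B(θ) v_{j−1}`. -/
def HH (n q r : ℕ) (A : (Fin q → ℝ) → Matrix (Fin n) (Fin n) ℝ)
    (B : (Fin q → ℝ) → (Fin n → ℝ)) (C : (Fin q → ℝ) → (Fin n → ℝ))
    (x : Fin n → ℝ) (θ : Fin q → ℝ) (v : Fin (r - 1) → ℝ) : Fin r → ℝ :=
  obsMat n q r A C θ *ᵥ x
    + ∑ j : Fin (r - 1), v j •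
        ((shiftMat r ^ ((j : ℕ) + 1)) *ᵥ (obsMat n q r A C θ *ᵥ B θ))

/-!
Put `μ_i = λ_i⁻¹`. Expanding the resolvent `(A - λ_i)⁻¹ = -μ_i (1 - μ_i A)⁻¹` in powers of `μ_i`,
and the filter state as `w_i ≈ -∑ l, μ_i ^ (l + 1) u^(l)`, the coefficient of `-μ_i ^ (j + 1)` in
`T_i` for `j < r` is the `j`-th output derivative, that is, the `j`-th entry of `𝓗_r`. Hence
`T(x, θ, w) - T(x*, θ*, w)` is a Vandermonde-like matrix in the `μ_i` applied to
`𝓗_r(x*, θ*, v) - 𝓗_r(x, θ, v)`, up to a remainder. With `λ_i = k λ̃_i` the matrix is bounded below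
by a multiple of `k ^ (-r)`, while the remainder is `k ^ (-(r + 1))` times a function of `(x, θ)`
that is Lipschitz uniformly in `k`, so it is absorbed for large `k`. Uniformity needs the defect of
the approximation of `w_i`, rescaled by `λ_i ^ r`, to be bounded; the initial transient contributes
`|λ_i| ^ r exp(λ_i t)`, which is bounded for `t ≥ τ` whatever `λ_i < 0`.
-/

section StateDerivatives

variable {ι R : Type*} [Fintype ι] [DecidableEq ι] [CommRing R]

/-- The `j`-th time derivative of a solution of `ẋ = A x + u B`, as a function of the current
state `x` and of the derivatives `v l = u^(l)` of the input, of which only those with `l < j`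
matter. -/
def stateDeriv (A : Matrix ι ι R) (B x : ι → R) (v : ℕ → R) : ℕ → ι → R
  | 0 => x
  | j + 1 => A *ᵥ stateDeriv A B x v j + v j • B

theorem stateDeriv_eq_pow_mulVec_add_sum (A : Matrix ι ι R) (B x : ι → R) (v : ℕ → R) (i : ℕ) :
    stateDeriv A B x v i =
      (A ^ i) *ᵥ x + ∑ l ∈ Finset.range i, v l • ((A ^ (i - (l + 1))) *ᵥ B) := by
  induction i with
  | zero => simp [stateDeriv]
  | succ i ih =>
    have hsum : A *ᵥ ∑ l ∈ Finset.range i, v l • ((A ^ (i - (l + 1))) *ᵥ B) =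
        ∑ l ∈ Finset.range i, v l • ((A ^ (i + 1 - (l + 1))) *ᵥ B) := by
      rw [Matrix.mulVec_sum]
      refine Finset.sum_congr rfl fun l hl => ?_
      have hl : i + 1 - (l + 1) = i - (l + 1) + 1 := by grind
      rw [Matrix.mulVec_smul, Matrix.mulVec_mulVec, hl, pow_succ']
    rw [stateDeriv, ih, Matrix.mulVec_add, Matrix.mulVec_mulVec, ← pow_succ', hsum,
      Finset.sum_range_succ]
    simp [add_assoc]

theorem one_sub_smul_mulVec_sum_pow_smul_stateDeriv (A : Matrix ι ι R) (B x : ι → R) (v : ℕ → R)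
    (μ : R) (r : ℕ) :
    (1 - μ • A) *ᵥ (∑ j ∈ Finset.range r, μ ^ j • stateDeriv A B x v j) =
      x + (∑ l ∈ Finset.range r, μ ^ (l + 1) * v l) • B - μ ^ r • stateDeriv A B x v r := by
  induction r with
  | zero => simp [stateDeriv]
  | succ r ih =>
    rw [Finset.sum_range_succ, Matrix.mulVec_add, ih, Finset.sum_range_succ, stateDeriv,
      Matrix.sub_mulVec, Matrix.one_mulVec, Matrix.smul_mulVec, Matrix.mulVec_smul]
    module

end StateDerivatives

section OutputDerivatives

theorem shiftMat_mulVec_apply {r : ℕ} (g : Fin r → ℝ) (i : Fin r) :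
    (shiftMat r *ᵥ g) i = if h : 1 ≤ (i : ℕ) then g ⟨i - 1, by omega⟩ else 0 := by
  have happly : (shiftMat r *ᵥ g) i = ∑ j : Fin r, (if (i : ℕ) = j + 1 then g j else 0) := by
    simp [Matrix.mulVec, dotProduct, shiftMat]
  rw [happly]
  split_ifs with h
  · rw [Finset.sum_eq_single ⟨i - 1, by omega⟩] <;> grind
  · exact Finset.sum_eq_zero fun j _ => if_neg (by omega)

theorem shiftMat_pow_mulVec_apply {r : ℕ} (m : ℕ) (g : Fin r → ℝ) (i : Fin r) :
    ((shiftMat r ^ m) *ᵥ g) i = if h : m ≤ (i : ℕ) then g ⟨i - m, by omega⟩ else 0 := by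
  induction m generalizing i with
  | zero => simp
  | succ m ih =>
    rw [pow_succ', ← Matrix.mulVec_mulVec, shiftMat_mulVec_apply]
    simp only [ih]
    grind

variable {n q r : ℕ} (A : (Fin q → ℝ) → Matrix (Fin n) (Fin n) ℝ)
  (B C : (Fin q → ℝ) → (Fin n → ℝ))

theorem obsMat_mulVec_apply (θ : Fin q → ℝ) (y : Fin n → ℝ) (j : Fin r) :
    (obsMat n q r A C θ *ᵥ y) j = C θ ⬝ᵥ ((A θ ^ (j : ℕ)) *ᵥ y) :=
  (Matrix.dotProduct_mulVec _ _ _).symm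

theorem HH_apply (x : Fin n → ℝ) (θ : Fin q → ℝ) (v : ℕ → ℝ) (i : Fin r) :
    HH n q r A B C x θ (fun j => v j) i = C θ ⬝ᵥ stateDeriv (A θ) (B θ) x v i := by
  let a (j : ℕ) : ℝ :=
    if j + 1 ≤ (i : ℕ) then v j * C θ ⬝ᵥ ((A θ ^ ((i : ℕ) - (j + 1))) *ᵥ B θ) else 0
  have hshift (j : Fin (r - 1)) :
      (v j • ((shiftMat r ^ ((j : ℕ) + 1)) *ᵥ (obsMat n q r A C θ *ᵥ B θ))) i = a j := by
    simp only [a, Pi.smul_apply, shiftMat_pow_mulVec_apply, obsMat_mulVec_apply, smul_eq_mul]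
    split_ifs <;> simp
  have hsum : ∑ j ∈ Finset.range (r - 1), a j =
      ∑ j ∈ Finset.range i, v j * C θ ⬝ᵥ ((A θ ^ ((i : ℕ) - (j + 1))) *ᵥ B θ) := by
    rw [← Finset.sum_subset (s₁ := Finset.range i) (by grind) (by grind)]
    exact Finset.sum_congr rfl fun j hj => if_pos (Finset.mem_range.1 hj)
  rw [HH, Pi.add_apply, Finset.sum_apply, Finset.sum_congr rfl fun j _ => hshift j,
    Fin.sum_univ_eq_sum_range, hsum, obsMat_mulVec_apply, stateDeriv_eq_pow_mulVec_add_sum]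
  simp [dotProduct_add, dotProduct_sum]

end OutputDerivatives

section Expansion

variable {ι 𝕜 : Type*} [DecidableEq ι] [Field 𝕜]

theorem sub_smul_one_eq {lam : 𝕜} (hlam : lam ≠ 0) (A : Matrix ι ι 𝕜) :
    A - lam • (1 : Matrix ι ι 𝕜) = (-lam) • (1 - lam⁻¹ • A) := by
  rw [smul_sub, smul_smul, neg_mul, mul_inv_cancel₀ hlam]
  module

variable [Fintype ι]

/-- The component `T_i(x, θ, w_i)` of the map `T`, with `λ_i = lam`, for the system matrices `A`,
`B`, `C` at a fixed parameter `θ`. -/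
noncomputable def luenbergerMap (A : Matrix ι ι 𝕜) (B C x : ι → 𝕜) (lam w : 𝕜) : 𝕜 :=
  Matrix.vecMul C (A - lam • (1 : Matrix ι ι 𝕜))⁻¹ ⬝ᵥ (x - w • B)

/-- The defect, rescaled by `lam ^ r`, in the high-gain approximation
`w ≈ -∑ l < r, u^(l) / lam ^ (l + 1)` of a solution of `ẇ = lam w + u`, where `v l = u^(l)`. -/
def filterRemainder (r : ℕ) (lam : 𝕜) (v : ℕ → 𝕜) (w : 𝕜) : 𝕜 :=
  lam ^ r * (w + ∑ l ∈ Finset.range r, lam⁻¹ ^ (l + 1) * v l)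

/-- The remainder, rescaled by `-μ⁻¹ ^ (r + 1)`, in the expansion of `luenbergerMap` in powers of
`μ = lam⁻¹`; the argument `ζ` stands for the `filterRemainder`. -/
noncomputable def luenbergerRemainder (r : ℕ) (A : Matrix ι ι 𝕜) (B C x : ι → 𝕜) (v : ℕ → 𝕜)
    (μ ζ : 𝕜) : 𝕜 :=
  C ⬝ᵥ ((1 - μ • A)⁻¹ *ᵥ (stateDeriv A B x v r - ζ • B))

theorem isUnit_sub_smul_one {lam : 𝕜} (hlam : lam ≠ 0) {A : Matrix ι ι 𝕜}
    (hA : IsUnit (1 - lam⁻¹ • A)) : IsUnit (A - lam • (1 : Matrix ι ι 𝕜)) := by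
  rw [sub_smul_one_eq hlam]
  exact hA.smul (Units.mk0 (-lam) (neg_ne_zero.2 hlam))

theorem sub_smul_one_inv {lam : 𝕜} (hlam : lam ≠ 0) {A : Matrix ι ι 𝕜}
    (hA : IsUnit (1 - lam⁻¹ • A)) :
    (A - lam • (1 : Matrix ι ι 𝕜))⁻¹ = (-lam⁻¹) • (1 - lam⁻¹ • A)⁻¹ := by
  refine Matrix.inv_eq_left_inv ?_
  rw [sub_smul_one_eq hlam, smul_mul_smul_comm,
    Matrix.nonsing_inv_mul _ ((Matrix.isUnit_iff_isUnit_det _).1 hA), neg_mul_neg,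
    inv_mul_cancel₀ hlam, one_smul]

theorem luenbergerMap_eq_neg_sum_sub {lam : 𝕜} (hlam : lam ≠ 0) {A : Matrix ι ι 𝕜}
    (hA : IsUnit (1 - lam⁻¹ • A)) (B C x : ι → 𝕜) (v : ℕ → 𝕜) (w : 𝕜) (r : ℕ) :
    luenbergerMap A B C x lam w =
      -(∑ j ∈ Finset.range r, lam⁻¹ ^ (j + 1) * (C ⬝ᵥ stateDeriv A B x v j)) -
        lam⁻¹ ^ (r + 1) *
          luenbergerRemainder r A B C x v lam⁻¹ (filterRemainder r lam v w) := by
  set μ := lam⁻¹ with hμ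
  set ζ := filterRemainder r lam v w with hζ
  have hw : w = μ ^ r * ζ - ∑ l ∈ Finset.range r, μ ^ (l + 1) * v l := by
    rw [hζ, filterRemainder, ← mul_assoc, ← mul_pow, hμ, inv_mul_cancel₀ hlam, one_pow, one_mul,
      add_sub_cancel_right]
  have hsplit : x - w • B = (1 - μ • A) *ᵥ (∑ j ∈ Finset.range r, μ ^ j • stateDeriv A B x v j) +
      μ ^ r • (stateDeriv A B x v r - ζ • B) := by
    rw [one_sub_smul_mulVec_sum_pow_smul_stateDeriv, hw]
    module
  rw [luenbergerMap, sub_smul_one_inv hlam hA, ← Matrix.dotProduct_mulVec, hsplit,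
    Matrix.smul_mulVec, Matrix.mulVec_add, Matrix.mulVec_mulVec,
    Matrix.nonsing_inv_mul _ ((Matrix.isUnit_iff_isUnit_det _).1 hA), Matrix.one_mulVec,
    Matrix.mulVec_smul, luenbergerRemainder]
  simp only [dotProduct_smul, dotProduct_add, dotProduct_sum, smul_eq_mul, pow_succ', mul_assoc,
    ← Finset.mul_sum]
  ring

end Expansion

section UniformlyBoundedLipschitz

open scoped NNReal

variable {ι κ X Y E F G : Type*} [PseudoMetricSpace X] [PseudoMetricSpace Y]
  [NormedAddCommGroup E]

/-- The functions `f i` are bounded and Lipschitz on `s`, uniformly in `i`. A single constant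
serves both as bound and as Lipschitz constant. -/
def UniformlyBoundedLipschitzOn (f : ι → X → E) (s : Set X) : Prop :=
  ∃ K : ℝ≥0, ∀ i, LipschitzOnWith K (f i) s ∧ ∀ x ∈ s, ‖f i x‖ ≤ K

namespace UniformlyBoundedLipschitzOn

variable {s : Set X}

theorem of_lipschitzOnWith {f : ι → X → E} {K b : ℝ≥0} (hf : ∀ i, LipschitzOnWith K (f i) s)
    (hb : ∀ i, ∀ x ∈ s, ‖f i x‖ ≤ b) : UniformlyBoundedLipschitzOn f s :=
  ⟨max K b, fun i => ⟨(hf i).weaken (le_max_left K b),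
    fun x hx => (hb i x hx).trans (NNReal.coe_le_coe.2 (le_max_right K b))⟩⟩

theorem of_isBounded_image {f : X → E} {K : ℝ≥0} (hf : LipschitzOnWith K f s)
    (hb : Bornology.IsBounded (f '' s)) : UniformlyBoundedLipschitzOn (fun _ : ι => f) s := by
  obtain ⟨b, hb⟩ := hb.exists_norm_le
  exact of_lipschitzOnWith (b := b.toNNReal) (fun _ => hf)
    fun _ x hx => (hb _ ⟨x, hx, rfl⟩).trans (Real.le_coe_toNNReal b)

theorem of_isCompact {f : X → E} (hs : IsCompact s) (hf : LocallyLipschitzOn s f) :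
    UniformlyBoundedLipschitzOn (fun _ : ι => f) s :=
  let ⟨_, hK⟩ := hf.exists_lipschitzOnWith_of_compact hs
  of_isBounded_image hK (hs.image_of_continuousOn hf.continuousOn).isBounded

theorem of_const {c : ι → E} {b : ℝ} (hc : ∀ i, ‖c i‖ ≤ b) :
    UniformlyBoundedLipschitzOn (fun i (_ : X) => c i) s :=
  of_lipschitzOnWith (K := 0) (b := b.toNNReal)
    (fun i => (LipschitzWith.const (c i)).lipschitzOnWith)
    fun i _ _ => (hc i).trans (Real.le_coe_toNNReal b)

theorem comp_lipschitzWith {f : ι → X → E} (hf : UniformlyBoundedLipschitzOn f s) {g : Y → X}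
    {C : ℝ≥0} (hg : LipschitzWith C g) {t : Set Y} (hgt : Set.MapsTo g t s) :
    UniformlyBoundedLipschitzOn (fun i => f i ∘ g) t := by
  obtain ⟨K, hK⟩ := hf
  exact of_lipschitzOnWith (fun i => (hK i).1.comp hg.lipschitzOnWith hgt)
    fun i y hy => (hK i).2 _ (hgt hy)

theorem add {f g : ι → X → E} (hf : UniformlyBoundedLipschitzOn f s)
    (hg : UniformlyBoundedLipschitzOn g s) :
    UniformlyBoundedLipschitzOn (fun i x => f i x + g i x) s := by
  obtain ⟨K, hK⟩ := hf
  obtain ⟨L, hL⟩ := hg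
  exact ⟨K + L, fun i => ⟨(hK i).1.add (hL i).1,
    fun x hx => norm_add_le_of_le ((hK i).2 x hx) ((hL i).2 x hx)⟩⟩

variable [NormedSpace ℝ E] [NormedAddCommGroup F] [NormedSpace ℝ F] [NormedAddCommGroup G]
  [NormedSpace ℝ G]

theorem bilinear (T : E →L[ℝ] F →L[ℝ] G) {f : ι → X → E} {g : ι → X → F}
    (hf : UniformlyBoundedLipschitzOn f s) (hg : UniformlyBoundedLipschitzOn g s) :
    UniformlyBoundedLipschitzOn (fun i x => T (f i x) (g i x)) s := by
  obtain ⟨K, hK⟩ := hf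
  obtain ⟨L, hL⟩ := hg
  refine of_lipschitzOnWith (K := ‖T‖₊ * K * L + ‖T‖₊ * K * L) (b := ‖T‖₊ * K * L)
    (fun i => LipschitzOnWith.of_dist_le_mul fun x hx y hy => ?_)
    fun i x hx => T.le_of_opNorm₂_le_of_le le_rfl ((hK i).2 x hx) ((hL i).2 x hx)
  have hsplit : T (f i x) (g i x) - T (f i y) (g i y) =
      T (f i x - f i y) (g i x) + T (f i y) (g i x - g i y) := by
    simp
  have hfxy : ‖f i x - f i y‖ ≤ K * dist x y := by
    simpa [dist_eq_norm] using (hK i).1.dist_le_mul x hx y hy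
  have hgxy : ‖g i x - g i y‖ ≤ L * dist x y := by
    simpa [dist_eq_norm] using (hL i).1.dist_le_mul x hx y hy
  rw [dist_eq_norm, hsplit]
  calc ‖T (f i x - f i y) (g i x) + T (f i y) (g i x - g i y)‖
      ≤ ‖T‖ * (K * dist x y) * L + ‖T‖ * K * (L * dist x y) :=
        norm_add_le_of_le (T.le_of_opNorm₂_le_of_le le_rfl hfxy ((hL i).2 x hx))
          (T.le_of_opNorm₂_le_of_le le_rfl ((hK i).2 y hy) hgxy)
    _ = ↑(‖T‖₊ * K * L + ‖T‖₊ * K * L) * dist x y := by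
        push_cast
        ring

/- The fixed-point equation controls `z = (1 - N)⁻¹ y` without inverting `1 - N`: the terms in `z`
on its right-hand side are absorbed by the left-hand side. -/
theorem of_eq_add_apply {N : ι → X → E →L[ℝ] E} {y z : ι → X → E}
    (hN : UniformlyBoundedLipschitzOn N s) (hy : UniformlyBoundedLipschitzOn y s)
    (hhalf : ∀ i, ∀ x ∈ s, ‖N i x‖ ≤ 1 / 2) (hz : ∀ i, ∀ x ∈ s, z i x = y i x + N i x (z i x)) :
    UniformlyBoundedLipschitzOn z s := by
  obtain ⟨K, hK⟩ := hN
  obtain ⟨L, hL⟩ := hy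
  have hbound : ∀ i, ∀ x ∈ s, ‖z i x‖ ≤ 2 * L := fun i x hx => by
    have hnorm : ‖z i x‖ ≤ L + 1 / 2 * ‖z i x‖ := calc
      ‖z i x‖ = ‖y i x + N i x (z i x)‖ := congrArg _ (hz i x hx)
      _ ≤ L + 1 / 2 * ‖z i x‖ :=
        norm_add_le_of_le ((hL i).2 x hx) ((N i x).le_of_opNorm_le (hhalf i x hx) _)
    linarith
  refine of_lipschitzOnWith (K := 2 * (L + K * (2 * L))) (b := 2 * L)
    (fun i => LipschitzOnWith.of_dist_le_mul fun x hx x' hx' => ?_) hbound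
  have hsplit : z i x - z i x' =
      (y i x - y i x') + (N i x - N i x') (z i x) + N i x' (z i x - z i x') := by
    conv_lhs => rw [hz i x hx, hz i x' hx']
    simp only [sub_apply, map_sub]
    abel
  have hyx : ‖y i x - y i x'‖ ≤ L * dist x x' := by
    simpa [dist_eq_norm] using (hL i).1.dist_le_mul x hx x' hx'
  have hNx : ‖N i x - N i x'‖ ≤ K * dist x x' := by
    simpa [dist_eq_norm] using (hK i).1.dist_le_mul x hx x' hx'
  have hnorm : ‖z i x - z i x'‖ ≤
      L * dist x x' + K * dist x x' * (2 * L) + 1 / 2 * ‖z i x - z i x'‖ := calc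
    ‖z i x - z i x'‖ =
        ‖(y i x - y i x') + (N i x - N i x') (z i x) + N i x' (z i x - z i x')‖ :=
      congrArg _ hsplit
    _ ≤ _ := norm_add_le_of_le
      (norm_add_le_of_le hyx ((N i x - N i x').le_of_opNorm_le_of_le hNx (hbound i x hx)))
      ((N i x').le_of_opNorm_le (hhalf i x' hx') _)
  rw [dist_eq_norm]
  push_cast
  linarith

end UniformlyBoundedLipschitzOn

end UniformlyBoundedLipschitz

section LipschitzRemainder

variable {n : ℕ}

/-- Matrix-vector multiplication as a continuous bilinear map, for the sup norms. Its value at a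
matrix is an operator, whose operator norm controls Neumann-type perturbations. -/
noncomputable def mulVecCLM (n : ℕ) :
    Matrix (Fin n) (Fin n) ℝ →L[ℝ] (Fin n → ℝ) →L[ℝ] (Fin n → ℝ) :=
  (Matrix.mulVecBilin ℝ ℝ).toContinuousBilinearMap

@[simp]
theorem mulVecCLM_apply (M : Matrix (Fin n) (Fin n) ℝ) (x : Fin n → ℝ) :
    mulVecCLM n M x = M *ᵥ x :=
  rfl

theorem isUnit_one_sub_of_norm_mulVecCLM_lt_one {M : Matrix (Fin n) (Fin n) ℝ}
    (hM : ‖mulVecCLM n M‖ < 1) : IsUnit (1 - M) := by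
  rw [← Matrix.mulVec_injective_iff_isUnit, ← Matrix.coe_mulVecLin,
    injective_iff_map_eq_zero]
  intro x hx
  have hfix : x = M *ᵥ x := by
    simpa [Matrix.sub_mulVec, sub_eq_zero] using hx
  by_contra hx0
  have hlt : ‖M *ᵥ x‖ < ‖x‖ :=
    ((mulVecCLM n M).le_opNorm x).trans_lt (mul_lt_of_lt_one_left (norm_pos_iff.2 hx0) hM)
  exact hlt.ne (congrArg norm hfix.symm)

theorem exists_norm_mulVecCLM_smul_le_half {X : Type*} [TopologicalSpace X] {s : Set X}
    (hs : IsCompact s) {A : X → Matrix (Fin n) (Fin n) ℝ} (hA : ContinuousOn A s) :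
    ∃ μ₀ > 0, ∀ μ : ℝ, |μ| ≤ μ₀ → ∀ θ ∈ s, ‖mulVecCLM n (μ • A θ)‖ ≤ 1 / 2 := by
  obtain ⟨b, hb0, hb⟩ :=
    (hs.image_of_continuousOn ((mulVecCLM n).continuous.comp_continuousOn hA)).isBounded
      |>.exists_pos_norm_le
  refine ⟨1 / 2 / b, by positivity, fun μ hμ θ hθ => ?_⟩
  rw [map_smul, norm_smul, Real.norm_eq_abs]
  calc |μ| * ‖mulVecCLM n (A θ)‖ ≤ 1 / 2 / b * b := by
        gcongr
        exact hb _ ⟨θ, hθ, rfl⟩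
    _ = 1 / 2 := div_mul_cancel₀ _ hb0.ne'

variable {ι X : Type*} [PseudoMetricSpace X] {s : Set X}
  {A : X → Matrix (Fin n) (Fin n) ℝ} {B C x : X → Fin n → ℝ} {v : ι → ℕ → ℝ} {r : ℕ} {b : ℝ}

theorem uniformlyBoundedLipschitzOn_stateDeriv
    (hA : UniformlyBoundedLipschitzOn (fun _ : ι => A) s)
    (hB : UniformlyBoundedLipschitzOn (fun _ : ι => B) s)
    (hx : UniformlyBoundedLipschitzOn (fun _ : ι => x) s) (hv : ∀ i, ∀ l < r, |v i l| ≤ b) :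
    UniformlyBoundedLipschitzOn (fun i p => stateDeriv (A p) (B p) (x p) (v i) r) s := by
  induction r with
  | zero => exact hx
  | succ r ih =>
    have hvr : UniformlyBoundedLipschitzOn (fun i (_ : X) => v i r) s :=
      .of_const fun i => hv i r r.lt_succ_self
    exact (hA.bilinear (mulVecCLM n) (ih fun i l hl => hv i l (hl.trans r.lt_succ_self))).add
      (hvr.bilinear (ContinuousLinearMap.lsmul ℝ ℝ) hB)

theorem uniformlyBoundedLipschitzOn_luenbergerRemainder {μ ζ : ι → ℝ}
    (hA : UniformlyBoundedLipschitzOn (fun _ : ι => A) s)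
    (hB : UniformlyBoundedLipschitzOn (fun _ : ι => B) s)
    (hC : UniformlyBoundedLipschitzOn (fun _ : ι => C) s)
    (hx : UniformlyBoundedLipschitzOn (fun _ : ι => x) s) (hv : ∀ i, ∀ l < r, |v i l| ≤ b)
    (hζ : ∀ i, |ζ i| ≤ b) {μ₀ : ℝ} (hμ : ∀ i, |μ i| ≤ μ₀)
    (hhalf : ∀ i, ∀ p ∈ s, ‖mulVecCLM n (μ i • A p)‖ ≤ 1 / 2) :
    UniformlyBoundedLipschitzOn
      (fun i p => luenbergerRemainder r (A p) (B p) (C p) (x p) (v i) (μ i) (ζ i)) s := by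
  have hN : UniformlyBoundedLipschitzOn (fun i p => mulVecCLM n (μ i • A p)) s := by
    have hconst : UniformlyBoundedLipschitzOn (fun i (_ : X) => μ i) s := .of_const hμ
    simp only [map_smul]
    exact hconst.bilinear
      ((ContinuousLinearMap.lsmul ℝ ℝ).bilinearComp (.id ℝ ℝ) (mulVecCLM n)) hA
  have hy : UniformlyBoundedLipschitzOn
      (fun i p => stateDeriv (A p) (B p) (x p) (v i) r - ζ i • B p) s := by
    have hconst : UniformlyBoundedLipschitzOn (fun i (_ : X) => -ζ i) s :=
      .of_const fun i => (norm_neg (ζ i)).trans_le (hζ i)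
    simpa [sub_eq_add_neg] using (uniformlyBoundedLipschitzOn_stateDeriv hA hB hx hv).add
      (hconst.bilinear (ContinuousLinearMap.lsmul ℝ ℝ) hB)
  refine hC.bilinear (dotProductBilin ℝ ℝ).toContinuousBilinearMap
    (.of_eq_add_apply hN hy hhalf fun i p hp => ?_)
  have hunit : IsUnit (1 - μ i • A p).det := (Matrix.isUnit_iff_isUnit_det _).1
    (isUnit_one_sub_of_norm_mulVecCLM_lt_one ((hhalf i p hp).trans_lt one_half_lt_one))
  rw [mulVecCLM_apply, ← sub_eq_iff_eq_add]
  nth_rewrite 1 [← Matrix.one_mulVec ((1 - μ i • A p)⁻¹ *ᵥ _)]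
  rw [← Matrix.sub_mulVec, Matrix.mulVec_mulVec, Matrix.mul_nonsing_inv _ hunit,
    Matrix.one_mulVec]

end LipschitzRemainder

section FilterRemainder

open Set

theorem le_add_exp_mul_of_hasDerivWithinAt {z d : ℝ → ℝ} {lam D : ℝ} (hlam : lam < 0) (hD : 0 ≤ D)
    (hz : ∀ t ≥ 0, HasDerivWithinAt z (lam * z t + d t) (Ici 0) t)
    (hd : ∀ t ≥ 0, d t ≤ -lam * D) {t : ℝ} (ht : 0 ≤ t) :
    z t ≤ D + Real.exp (lam * t) * |z 0| := by
  have hcont : ContinuousOn z (Icc 0 t) := fun s hs =>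
    ((hz s hs.1).mono Icc_subset_Ici_self).continuousWithinAt
  have hslope : ∀ s ∈ Ico 0 t, ∀ c, lam * z s + d s < c →
      ∃ᶠ y in nhdsWithin s (Ioi s), (y - s)⁻¹ * (z y - z s) < c := fun s hs c hc =>
    ((hz s hs.1).mono (Ici_subset_Ici.2 hs.1)).liminf_right_slope_le hc
  have hgronwall : z t ≤ gronwallBound |z 0| lam (-lam * D) (t - 0) :=
    le_gronwallBound_of_liminf_deriv_right_le hcont hslope (le_abs_self _)
      (fun s hs => add_le_add_right (hd s hs.1) _) t (right_mem_Icc.2 ht)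
  have hconst : -lam * D / lam = -D := by
    field_simp [hlam.ne]
  rw [gronwallBound_of_K_ne_0 hlam.ne, hconst, sub_zero] at hgronwall
  linarith [mul_nonneg hD (Real.exp_pos (lam * t)).le]

theorem abs_le_add_exp_mul_of_hasDerivWithinAt {z d : ℝ → ℝ} {lam D : ℝ} (hlam : lam < 0)
    (hz : ∀ t ≥ 0, HasDerivWithinAt z (lam * z t + d t) (Ici 0) t)
    (hd : ∀ t ≥ 0, |d t| ≤ -lam * D) {t : ℝ} (ht : 0 ≤ t) :
    |z t| ≤ D + Real.exp (lam * t) * |z 0| := by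
  have hD : 0 ≤ D := nonneg_of_mul_nonneg_right ((abs_nonneg _).trans (hd 0 le_rfl))
    (neg_pos.2 hlam)
  have hneg : ∀ t ≥ 0, HasDerivWithinAt (-z) (lam * (-z) t + (-d) t) (Ici 0) t := fun t ht =>
    (hz t ht).neg.congr_deriv (by simp only [Pi.neg_apply]; ring)
  refine abs_le'.2 ⟨le_add_exp_mul_of_hasDerivWithinAt hlam hD hz
    (fun t ht => (le_abs_self _).trans (hd t ht)) ht, ?_⟩
  simpa using le_add_exp_mul_of_hasDerivWithinAt hlam hD hneg
    (fun t ht => (neg_le_abs _).trans (hd t ht)) ht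

theorem pow_mul_exp_neg_mul_le {a t τ : ℝ} (ha : 0 ≤ a) (hτ : 0 < τ) (ht : τ ≤ t) (r : ℕ) :
    a ^ r * Real.exp (-(a * t)) ≤ r.factorial / τ ^ r := by
  have hexp : (a * t) ^ r / r.factorial ≤ Real.exp (a * t) :=
    Real.pow_div_factorial_le_exp _ (mul_nonneg ha (hτ.le.trans ht)) r
  rw [Real.exp_neg, ← div_eq_mul_inv, div_le_div_iff₀ (Real.exp_pos _) (pow_pos hτ r)]
  calc a ^ r * τ ^ r ≤ (a * t) ^ r := by
        rw [← mul_pow]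
        gcongr
    _ ≤ r.factorial * Real.exp (a * t) := by
        rwa [div_le_iff₀' (by positivity)] at hexp

variable {u : ℕ → ℝ → ℝ} {w : ℝ → ℝ} {lam b : ℝ}

theorem hasDerivWithinAt_add_sum_inv_pow_mul (hlam : lam ≠ 0) {s : Set ℝ} {t : ℝ} {m : ℕ}
    (hu : ∀ l < m, HasDerivWithinAt (u l) (u (l + 1) t) s t)
    (hw : HasDerivWithinAt w (lam * w t + u 0 t) s t) :
    HasDerivWithinAt (fun t => w t + ∑ l ∈ Finset.range m, lam⁻¹ ^ (l + 1) * u l t)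
      (lam * (w t + ∑ l ∈ Finset.range m, lam⁻¹ ^ (l + 1) * u l t) + lam⁻¹ ^ m * u m t) s t := by
  have hsum : HasDerivWithinAt (fun t => ∑ l ∈ Finset.range m, lam⁻¹ ^ (l + 1) * u l t)
      (∑ l ∈ Finset.range m, lam⁻¹ ^ (l + 1) * u (l + 1) t) s t :=
    HasDerivWithinAt.fun_sum fun l hl => (hu l (Finset.mem_range.1 hl)).const_mul _
  have htelescope : lam * ∑ l ∈ Finset.range m, lam⁻¹ ^ (l + 1) * u l t + lam⁻¹ ^ m * u m t =
      u 0 t + ∑ l ∈ Finset.range m, lam⁻¹ ^ (l + 1) * u (l + 1) t := by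
    have hcancel (l : ℕ) : lam * (lam⁻¹ ^ (l + 1) * u l t) = lam⁻¹ ^ l * u l t := by
      rw [pow_succ', ← mul_assoc, mul_inv_cancel_left₀ hlam]
    rw [Finset.mul_sum, Finset.sum_congr rfl fun l _ => hcancel l,
      ← Finset.sum_range_succ (fun l => lam⁻¹ ^ l * u l t), Finset.sum_range_succ']
    ring
  exact (hw.add hsum).congr_deriv (by linear_combination -htelescope)

theorem abs_sum_inv_pow_mul_le (hlam : 1 ≤ |lam|) {m : ℕ} {v : ℕ → ℝ} (hv : ∀ l < m, |v l| ≤ b) :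
    |∑ l ∈ Finset.range m, lam⁻¹ ^ (l + 1) * v l| ≤ m * b := by
  have hterm : ∀ l ∈ Finset.range m, |lam⁻¹ ^ (l + 1) * v l| ≤ b := fun l hl => by
    rw [abs_mul, abs_pow, abs_inv]
    exact (mul_le_of_le_one_left (abs_nonneg _)
      (pow_le_one₀ (by positivity) (inv_le_one_of_one_le₀ hlam))).trans
        (hv l (Finset.mem_range.1 hl))
  simpa using (Finset.abs_sum_le_sum_abs _ _).trans (Finset.sum_le_card_nsmul _ _ b hterm)

theorem filterRemainder_succ (hlam : lam ≠ 0) (m : ℕ) (v : ℕ → ℝ) (ω : ℝ) :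
    filterRemainder (m + 1) lam v ω =
      lam ^ (m + 1) * (ω + ∑ l ∈ Finset.range m, lam⁻¹ ^ (l + 1) * v l) + v m := by
  rw [filterRemainder, Finset.sum_range_succ, ← add_assoc, mul_add, ← mul_assoc, ← mul_pow,
    mul_inv_cancel₀ hlam, one_pow, one_mul]

theorem pow_mul_abs_add_sum_inv_pow_mul_le {m : ℕ} (hlam : lam ≤ -1)
    (hu : ∀ l < m, ∀ t ≥ 0, HasDerivWithinAt (u l) (u (l + 1) t) (Ici 0) t)
    (hub : ∀ l ≤ m, ∀ t ≥ 0, |u l t| ≤ b)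
    (hw : ∀ t ≥ 0, HasDerivWithinAt w (lam * w t + u 0 t) (Ici 0) t) {τ t : ℝ} (hτ : 0 < τ)
    (ht : τ ≤ t) :
    |lam| ^ (m + 1) * |w t + ∑ l ∈ Finset.range m, lam⁻¹ ^ (l + 1) * u l t| ≤
      b + (m + 1).factorial / τ ^ (m + 1) * (|w 0| + m * b) := by
  have hlam0 : lam < 0 := hlam.trans_lt neg_one_lt_zero
  have habs : |lam| = -lam := abs_of_neg hlam0
  set z : ℝ → ℝ := fun t => w t + ∑ l ∈ Finset.range m, lam⁻¹ ^ (l + 1) * u l t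
  have hforcing : ∀ s ≥ 0, |lam⁻¹ ^ m * u m s| ≤ -lam * (|lam|⁻¹ ^ (m + 1) * b) := fun s hs => by
    rw [← habs, pow_succ', ← mul_assoc, mul_inv_cancel_left₀ (abs_pos.2 hlam0.ne).ne', abs_mul,
      abs_pow, abs_inv]
    gcongr
    exact hub m le_rfl s hs
  have hzt : |z t| ≤ |lam|⁻¹ ^ (m + 1) * b + Real.exp (lam * t) * |z 0| :=
    abs_le_add_exp_mul_of_hasDerivWithinAt hlam0 (fun s hs =>
      hasDerivWithinAt_add_sum_inv_pow_mul hlam0.ne (fun l hl => hu l hl s hs) (hw s hs))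
      hforcing (hτ.le.trans ht)
  have hz0 : |z 0| ≤ |w 0| + m * b := (abs_add_le _ _).trans <| by
    gcongr
    exact abs_sum_inv_pow_mul_le (by linarith) fun l hl => hub l hl.le 0 le_rfl
  have hexp : |lam| ^ (m + 1) * Real.exp (lam * t) ≤ (m + 1).factorial / τ ^ (m + 1) := by
    simpa [habs] using pow_mul_exp_neg_mul_le (abs_nonneg lam) hτ ht (m + 1)
  have hcancel : |lam| ^ (m + 1) * |lam|⁻¹ ^ (m + 1) = 1 := by
    rw [← mul_pow, mul_inv_cancel₀ (abs_pos.2 hlam0.ne).ne', one_pow]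
  calc |lam| ^ (m + 1) * |z t|
      ≤ |lam| ^ (m + 1) * (|lam|⁻¹ ^ (m + 1) * b + Real.exp (lam * t) * |z 0|) := by gcongr
    _ = b + |lam| ^ (m + 1) * Real.exp (lam * t) * |z 0| := by linear_combination b * hcancel
    _ ≤ b + (m + 1).factorial / τ ^ (m + 1) * (|w 0| + m * b) := by gcongr

theorem abs_filterRemainder_le {r : ℕ} (hr : 0 < r) (hlam : lam ≤ -1)
    (hu : ∀ l, l + 1 < r → ∀ t ≥ 0, HasDerivWithinAt (u l) (u (l + 1) t) (Ici 0) t)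
    (hub : ∀ l < r, ∀ t ≥ 0, |u l t| ≤ b)
    (hw : ∀ t ≥ 0, HasDerivWithinAt w (lam * w t + u 0 t) (Ici 0) t) {τ t : ℝ} (hτ : 0 < τ)
    (ht : τ ≤ t) :
    |filterRemainder r lam (fun l => u l t) (w t)| ≤
      2 * b + r.factorial / τ ^ r * (|w 0| + r * b) := by
  obtain ⟨m, rfl⟩ := Nat.exists_eq_add_one.2 hr
  have hlast : |u m t| ≤ b := hub m m.lt_succ_self t (hτ.le.trans ht)
  have hb : 0 ≤ b := (abs_nonneg _).trans hlast
  have hz := pow_mul_abs_add_sum_inv_pow_mul_le hlam (fun l hl => hu l (Nat.succ_lt_succ hl))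
    (fun l hl => hub l (Nat.lt_succ_of_le hl)) hw hτ ht
  calc |filterRemainder (m + 1) lam (fun l => u l t) (w t)|
      ≤ |lam| ^ (m + 1) * |w t + ∑ l ∈ Finset.range m, lam⁻¹ ^ (l + 1) * u l t| + |u m t| := by
        rw [filterRemainder_succ (hlam.trans_lt neg_one_lt_zero).ne, ← abs_pow, ← abs_mul]
        exact abs_add_le _ _
    _ ≤ b + (m + 1).factorial / τ ^ (m + 1) * (|w 0| + m * b) + b := add_le_add hz hlast
    _ = 2 * b + (m + 1).factorial / τ ^ (m + 1) * (|w 0| + m * b) := by ring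
    _ ≤ 2 * b + (m + 1).factorial / τ ^ (m + 1) * (|w 0| + (m + 1 : ℕ) * b) := by
        gcongr
        exact m.le_succ

end FilterRemainder

section EuclideanNorm

variable {m p : ℕ}

theorem eNorm_eq_norm_toLp (x : Fin m → ℝ) : eNorm x = ‖WithLp.toLp 2 x‖ := by
  simp [eNorm, EuclideanSpace.norm_eq]

theorem abs_apply_le_eNorm (x : Fin m → ℝ) (i : Fin m) : |x i| ≤ eNorm x := by
  rw [eNorm_eq_norm_toLp]
  exact PiLp.norm_apply_le (WithLp.toLp 2 x) i

theorem eNorm_sub_eNorm_le (x y : Fin m → ℝ) : eNorm x - eNorm y ≤ eNorm (x - y) := by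
  simpa only [eNorm_eq_norm_toLp, WithLp.toLp_sub] using norm_sub_norm_le _ _

theorem eNorm_le_mul_eNorm {x y : Fin m → ℝ} {a : ℝ} (ha : 0 ≤ a) (h : ∀ i, |x i| ≤ a * |y i|) :
    eNorm x ≤ a * eNorm y := by
  rw [eNorm, eNorm, ← Real.sqrt_sq ha, ← Real.sqrt_mul (sq_nonneg a), Finset.mul_sum]
  refine Real.sqrt_le_sqrt (Finset.sum_le_sum fun i _ => ?_)
  rw [← sq_abs (x i), ← sq_abs (y i), ← mul_pow]
  gcongr
  exact h i

theorem norm_prodMk_le_cNorm (a : Fin m → ℝ) (b : Fin p → ℝ) : ‖(a, b)‖ ≤ cNorm a b := by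
  have ha : eNorm a ≤ cNorm a b :=
    Real.sqrt_le_sqrt (le_add_of_nonneg_right (Finset.sum_nonneg fun j _ => sq_nonneg (b j)))
  have hb : eNorm b ≤ cNorm a b :=
    Real.sqrt_le_sqrt (le_add_of_nonneg_left (Finset.sum_nonneg fun i _ => sq_nonneg (a i)))
  rw [Prod.norm_def]
  exact max_le
    ((pi_norm_le_iff_of_nonneg (Real.sqrt_nonneg _)).2 fun i => (abs_apply_le_eNorm a i).trans ha)
    ((pi_norm_le_iff_of_nonneg (Real.sqrt_nonneg _)).2 fun j => (abs_apply_le_eNorm b j).trans hb)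

theorem exists_mul_eNorm_le_eNorm_mulVec {M : Matrix (Fin m) (Fin m) ℝ} (hM : IsUnit M) :
    ∃ c > 0, ∀ h, c * eNorm h ≤ eNorm (M *ᵥ h) := by
  have hinj : Function.Injective (Matrix.toLpLin 2 2 M) := fun x y hxy =>
    WithLp.ofLp_injective 2 (Matrix.mulVec_injective_of_isUnit hM (WithLp.toLp_injective 2 hxy))
  obtain ⟨K, -, hK⟩ := (LinearMap.injective_iff_antilipschitz _).1 hinj
  obtain ⟨c, hc0, hc⟩ := antilipschitzWith_iff_exists_mul_le_norm.1 ⟨K, hK⟩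
  refine ⟨c, hc0, fun h => ?_⟩
  rw [eNorm_eq_norm_toLp, eNorm_eq_norm_toLp]
  exact hc (WithLp.toLp 2 h)

end EuclideanNorm

section InversePowerMatrix

variable {r : ℕ} {lam : Fin r → ℝ}

/-- The Vandermonde-like matrix of the inverse powers `lam i ^ -(j + 1)`, which weight the output
derivatives in the expansion of the map `T`. -/
noncomputable def inversePowerMatrix (lam : Fin r → ℝ) : Matrix (Fin r) (Fin r) ℝ :=
  .of fun i j => (lam i)⁻¹ ^ ((j : ℕ) + 1)

theorem isUnit_inversePowerMatrix (hlam0 : ∀ i, lam i ≠ 0) (hlam : Function.Injective lam) :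
    IsUnit (inversePowerMatrix lam) := by
  have hfactor : inversePowerMatrix lam = Matrix.diagonal lam⁻¹ * Matrix.vandermonde lam⁻¹ := by
    ext i j
    simp [inversePowerMatrix, Matrix.diagonal_mul, pow_succ']
  have hdiagonal : IsUnit (Matrix.diagonal lam⁻¹).det := by
    simpa [Finset.prod_eq_zero_iff] using hlam0
  have hvandermonde : IsUnit (Matrix.vandermonde lam⁻¹).det :=
    (Matrix.det_vandermonde_ne_zero_iff.2 (inv_injective.comp hlam)).isUnit
  rw [hfactor, Matrix.isUnit_iff_isUnit_det, Matrix.det_mul]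
  exact hdiagonal.mul hvandermonde

theorem inversePowerMatrix_mul_left_mulVec (k : ℝ) (h : Fin r → ℝ) :
    inversePowerMatrix (fun i => k * lam i) *ᵥ h =
      inversePowerMatrix lam *ᵥ fun j => k⁻¹ ^ ((j : ℕ) + 1) * h j := by
  ext i
  simp only [inversePowerMatrix, Matrix.mulVec, dotProduct, Matrix.of_apply, mul_inv, mul_pow]
  exact Finset.sum_congr rfl fun j _ => by ring

theorem exists_div_pow_mul_eNorm_le_eNorm_inversePowerMatrix_mulVec (hlam0 : ∀ i, lam i ≠ 0)
    (hlam : Function.Injective lam) :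
    ∃ c > 0, ∀ k ≥ 1, ∀ h,
      c / k ^ r * eNorm h ≤ eNorm (inversePowerMatrix (fun i => k * lam i) *ᵥ h) := by
  obtain ⟨c, hc0, hc⟩ := exists_mul_eNorm_le_eNorm_mulVec (isUnit_inversePowerMatrix hlam0 hlam)
  refine ⟨c, hc0, fun k hk h => ?_⟩
  have hscale : eNorm h ≤ k ^ r * eNorm fun j => k⁻¹ ^ ((j : ℕ) + 1) * h j := by
    refine eNorm_le_mul_eNorm (by positivity) fun j => ?_
    have hpow : 1 ≤ k ^ r * k⁻¹ ^ ((j : ℕ) + 1) := by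
      rw [inv_pow, ← div_eq_mul_inv, one_le_div (by positivity)]
      exact pow_le_pow_right₀ hk j.2
    have hnonneg : 0 ≤ k⁻¹ ^ ((j : ℕ) + 1) := by positivity
    rw [abs_mul, abs_of_nonneg hnonneg, ← mul_assoc]
    exact le_mul_of_one_le_left (abs_nonneg _) hpow
  calc c / k ^ r * eNorm h
      ≤ c / k ^ r * (k ^ r * eNorm fun j => k⁻¹ ^ ((j : ℕ) + 1) * h j) := by gcongr
    _ = c * eNorm fun j => k⁻¹ ^ ((j : ℕ) + 1) * h j := by field_simp
    _ ≤ eNorm (inversePowerMatrix (fun i => k * lam i) *ᵥ h) := by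
        rw [inversePowerMatrix_mul_left_mulVec]
        exact hc _

end InversePowerMatrix

section HighGain

open Filter

variable {n q r : ℕ} {A : (Fin q → ℝ) → Matrix (Fin n) (Fin n) ℝ}
  {B C : (Fin q → ℝ) → (Fin n → ℝ)}

theorem mul_eNorm_HH_sub_sub_le_eNorm_luenbergerMap_sub {lam : Fin r → ℝ} (hlam0 : ∀ i, lam i ≠ 0)
    {θ θ' : Fin q → ℝ} (hA : ∀ i, IsUnit (1 - (lam i)⁻¹ • A θ))
    (hA' : ∀ i, IsUnit (1 - (lam i)⁻¹ • A θ')) (x x' : Fin n → ℝ) (v : ℕ → ℝ) (w : Fin r → ℝ)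
    {c δ : ℝ} (hc : ∀ h, c * eNorm h ≤ eNorm (inversePowerMatrix lam *ᵥ h)) (hδ0 : 0 ≤ δ)
    (hδ : ∀ i, |(lam i)⁻¹| ^ (r + 1) *
      |luenbergerRemainder r (A θ) (B θ) (C θ) x v (lam i)⁻¹ (filterRemainder r (lam i) v (w i)) -
        luenbergerRemainder r (A θ') (B θ') (C θ') x' v (lam i)⁻¹
          (filterRemainder r (lam i) v (w i))| ≤ δ) :
    c * eNorm (HH n q r A B C x' θ' (fun j => v j) - HH n q r A B C x θ (fun j => v j)) -
        δ * eNorm (1 : Fin r → ℝ) ≤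
      eNorm fun i => luenbergerMap (A θ) (B θ) (C θ) x (lam i) (w i) -
        luenbergerMap (A θ') (B θ') (C θ') x' (lam i) (w i) := by
  set ρ : Fin r → ℝ := fun i => (lam i)⁻¹ ^ (r + 1) *
    (luenbergerRemainder r (A θ) (B θ) (C θ) x v (lam i)⁻¹ (filterRemainder r (lam i) v (w i)) -
      luenbergerRemainder r (A θ') (B θ') (C θ') x' v (lam i)⁻¹
        (filterRemainder r (lam i) v (w i))) with hρ
  have hexpand : (fun i => luenbergerMap (A θ) (B θ) (C θ) x (lam i) (w i) -
      luenbergerMap (A θ') (B θ') (C θ') x' (lam i) (w i)) =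
      inversePowerMatrix lam *ᵥ
        (HH n q r A B C x' θ' (fun j => v j) - HH n q r A B C x θ (fun j => v j)) - ρ := by
    ext i
    rw [luenbergerMap_eq_neg_sum_sub (hlam0 i) (hA i) _ _ _ v _ r,
      luenbergerMap_eq_neg_sum_sub (hlam0 i) (hA' i) _ _ _ v _ r, Finset.sum_range,
      Finset.sum_range]
    simp only [hρ, inversePowerMatrix, Matrix.mulVec, dotProduct, Matrix.of_apply, Pi.sub_apply,
      HH_apply, mul_sub, Finset.sum_sub_distrib]
    ring
  have hρle : eNorm ρ ≤ δ * eNorm (1 : Fin r → ℝ) :=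
    eNorm_le_mul_eNorm hδ0 fun i => by simpa [hρ, abs_mul] using hδ i
  rw [hexpand]
  exact (sub_le_sub (hc _) hρle).trans (eNorm_sub_eNorm_le _ _)

variable {Cx : Set (Fin n → ℝ)} {Cθ : Set (Fin q → ℝ)}

theorem exists_abs_luenbergerRemainder_sub_le (hCx : Bornology.IsBounded Cx) (hCθ : IsCompact Cθ)
    (hA : LocallyLipschitzOn Cθ A) (hB : LocallyLipschitzOn Cθ B) (hC : LocallyLipschitzOn Cθ C)
    {μ₀ : ℝ} (hhalf : ∀ μ : ℝ, |μ| ≤ μ₀ → ∀ θ ∈ Cθ, ‖mulVecCLM n (μ • A θ)‖ ≤ 1 / 2)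
    (r : ℕ) (b : ℝ) :
    ∃ K : ℝ, ∀ μ, |μ| ≤ μ₀ → ∀ ζ, |ζ| ≤ b → ∀ v : ℕ → ℝ, (∀ l < r, |v l| ≤ b) →
      ∀ x ∈ Cx, ∀ x' ∈ Cx, ∀ θ ∈ Cθ, ∀ θ' ∈ Cθ,
        |luenbergerRemainder r (A θ) (B θ) (C θ) x v μ ζ -
          luenbergerRemainder r (A θ') (B θ') (C θ') x' v μ ζ| ≤
            K * cNorm (x - x') (θ - θ') := by
  let ι := {p : ℝ × ℝ × (ℕ → ℝ) // |p.1| ≤ μ₀ ∧ |p.2.1| ≤ b ∧ ∀ l < r, |p.2.2 l| ≤ b}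
  have hsnd : Set.MapsTo Prod.snd (Cx ×ˢ Cθ) Cθ := fun p hp => hp.2
  have hfst : UniformlyBoundedLipschitzOn (fun _ : ι => Prod.fst) (Cx ×ˢ Cθ) :=
    .of_isBounded_image LipschitzWith.prod_fst.lipschitzOnWith
      (hCx.subset (Set.fst_image_prod_subset _ _))
  obtain ⟨K, hK⟩ := uniformlyBoundedLipschitzOn_luenbergerRemainder (ι := ι)
    (v := fun p => p.1.2.2) (μ := fun p => p.1.1) (ζ := fun p => p.1.2.1)
    ((UniformlyBoundedLipschitzOn.of_isCompact hCθ hA).comp_lipschitzWith LipschitzWith.prod_snd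
      hsnd)
    ((UniformlyBoundedLipschitzOn.of_isCompact hCθ hB).comp_lipschitzWith LipschitzWith.prod_snd
      hsnd)
    ((UniformlyBoundedLipschitzOn.of_isCompact hCθ hC).comp_lipschitzWith LipschitzWith.prod_snd
      hsnd)
    hfst (fun p => p.2.2.2) (fun p => p.2.2.1) (fun p => p.2.1)
    (fun p y hy => hhalf p.1.1 p.2.1 y.2 hy.2)
  refine ⟨K, fun μ hμ ζ hζ v hv x hx x' hx' θ hθ θ' hθ' => ?_⟩
  have hdist := (hK ⟨(μ, ζ, v), hμ, hζ, hv⟩).1.dist_le_mul (x, θ) ⟨hx, hθ⟩ (x', θ') ⟨hx', hθ'⟩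
  refine hdist.trans ?_
  rw [dist_eq_norm]
  exact mul_le_mul_of_nonneg_left (norm_prodMk_le_cNorm _ _) K.2

theorem eventually_abs_inv_mul_le {lam μ₀ : ℝ} (hμ₀ : 0 < μ₀) :
    ∀ᶠ k in atTop, |(k * lam)⁻¹| ≤ μ₀ := by
  have htendsto : Tendsto (fun k : ℝ => |(k * lam)⁻¹|) atTop (nhds 0) := by
    simpa only [mul_inv, zero_mul, abs_zero] using (tendsto_inv_atTop_zero.mul_const lam⁻¹).abs
  exact htendsto.eventually_le_const hμ₀

theorem eventually_abs_inv_mul_pow_mul_le (lam K : ℝ) {ε : ℝ} (hε : 0 < ε) (r : ℕ) :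
    ∀ᶠ k in atTop, |(k * lam)⁻¹| ^ (r + 1) * K ≤ ε / k ^ r := by
  have htendsto : Tendsto (fun k : ℝ => k⁻¹ * (|lam|⁻¹ ^ (r + 1) * K)) atTop (nhds 0) := by
    simpa using tendsto_inv_atTop_zero.mul_const (|lam|⁻¹ ^ (r + 1) * K)
  filter_upwards [htendsto.eventually_le_const hε, eventually_gt_atTop 0] with k hk hk0
  calc |(k * lam)⁻¹| ^ (r + 1) * K = k⁻¹ * (|lam|⁻¹ ^ (r + 1) * K) / k ^ r := by
        rw [abs_inv, abs_mul, abs_of_pos hk0, mul_inv, mul_pow]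
        ring
    _ ≤ ε / k ^ r := by gcongr

theorem eventually_abs_inv_mul_pow_mul_abs_luenbergerRemainder_sub_le
    (hCx : Bornology.IsBounded Cx) (hCθ : IsCompact Cθ) (hA : LocallyLipschitzOn Cθ A)
    (hB : LocallyLipschitzOn Cθ B) (hC : LocallyLipschitzOn Cθ C) (r : ℕ) (lam b : ℝ) {ε : ℝ}
    (hε : 0 < ε) :
    ∀ᶠ k in atTop, (∀ θ ∈ Cθ, IsUnit (1 - (k * lam)⁻¹ • A θ)) ∧
      ∀ ζ, |ζ| ≤ b → ∀ v : ℕ → ℝ, (∀ l < r, |v l| ≤ b) →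
        ∀ x ∈ Cx, ∀ x' ∈ Cx, ∀ θ ∈ Cθ, ∀ θ' ∈ Cθ,
          |(k * lam)⁻¹| ^ (r + 1) * |luenbergerRemainder r (A θ) (B θ) (C θ) x v (k * lam)⁻¹ ζ -
            luenbergerRemainder r (A θ') (B θ') (C θ') x' v (k * lam)⁻¹ ζ| ≤
              ε / k ^ r * cNorm (x - x') (θ - θ') := by
  obtain ⟨μ₀, hμ₀, hhalf⟩ := exists_norm_mulVecCLM_smul_le_half hCθ hA.continuousOn
  obtain ⟨K, hK⟩ := exists_abs_luenbergerRemainder_sub_le hCx hCθ hA hB hC hhalf r b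
  filter_upwards [eventually_abs_inv_mul_le hμ₀, eventually_abs_inv_mul_pow_mul_le lam K hε r]
    with k hμ hKε
  refine ⟨fun θ hθ => isUnit_one_sub_of_norm_mulVecCLM_lt_one
    ((hhalf _ hμ θ hθ).trans_lt one_half_lt_one), fun ζ hζ v hv x hx x' hx' θ hθ θ' hθ' => ?_⟩
  calc _ ≤ |(k * lam)⁻¹| ^ (r + 1) * (K * cNorm (x - x') (θ - θ')) := by
        gcongr
        exact hK _ hμ ζ hζ v hv x hx x' hx' θ hθ θ' hθ'
    _ = |(k * lam)⁻¹| ^ (r + 1) * K * cNorm (x - x') (θ - θ') := (mul_assoc _ _ _).symm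
    _ ≤ ε / k ^ r * cNorm (x - x') (θ - θ') :=
        mul_le_mul_of_nonneg_right hKε (Real.sqrt_nonneg _)

theorem injectivity_of_T_high_gain_general (hA : LocallyLipschitzOn Cθ A)
    (hB : LocallyLipschitzOn Cθ B) (hC : LocallyLipschitzOn Cθ C) (hCx : Bornology.IsBounded Cx)
    (hCθ : IsCompact Cθ) {U : Set (Fin (r - 1) → ℝ)} {LH : ℝ} (hLH : 0 < LH)
    (hinj : ∀ x ∈ Cx, ∀ x' ∈ Cx, ∀ θ ∈ Cθ, ∀ θ' ∈ Cθ, ∀ v ∈ U,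
      LH * cNorm (x - x') (θ - θ') ≤ eNorm (HH n q r A B C x' θ' v - HH n q r A B C x θ v))
    {u : ℕ → ℝ → ℝ}
    (hu : ∀ l, l + 1 < r → ∀ t ≥ 0, HasDerivWithinAt (u l) (u (l + 1) t) (Set.Ici 0) t)
    {𝔲 : ℝ} (hub : ∀ l < r, ∀ t ≥ 0, |u l t| ≤ 𝔲)
    {lam : Fin r → ℝ} (hlneg : ∀ i, lam i < 0) (hldist : Function.Injective lam)
    {τ : ℝ} (hτ : 0 < τ) (w0 : Fin r → ℝ) :
    ∃ kstar Lbar : ℝ, 0 < kstar ∧ 0 < Lbar ∧ ∀ k > kstar,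
      (∀ i, ∀ θ ∈ Cθ, IsUnit (A θ - (k * lam i) • (1 : Matrix (Fin n) (Fin n) ℝ)).det) ∧
      ∀ w : ℝ → Fin r → ℝ, w 0 = w0 →
        (∀ i, ∀ t ≥ 0,
          HasDerivWithinAt (fun s => w s i) (k * lam i * w t i + u 0 t) (Set.Ici 0) t) →
        ∀ t₁ ≥ τ, (fun j : Fin (r - 1) => u j t₁) ∈ U →
        ∀ x ∈ Cx, ∀ x' ∈ Cx, ∀ θ ∈ Cθ, ∀ θ' ∈ Cθ,
          Lbar / k ^ r * cNorm (x - x') (θ - θ') ≤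
            eNorm fun i => luenbergerMap (A θ) (B θ) (C θ) x (k * lam i) (w t₁ i) -
              luenbergerMap (A θ') (B θ') (C θ') x' (k * lam i) (w t₁ i) := by
  obtain ⟨c, hc0, hc⟩ := exists_div_pow_mul_eNorm_le_eNorm_inversePowerMatrix_mulVec
    (fun i => (hlneg i).ne) hldist
  set N := eNorm (1 : Fin r → ℝ)
  obtain ⟨ε, hε0, hεN⟩ := exists_pos_mul_lt (half_pos (mul_pos hc0 hLH)) N
  let b (i : Fin r) : ℝ := max 𝔲 (2 * 𝔲 + r.factorial / τ ^ r * (|w0 i| + r * 𝔲))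
  obtain ⟨k₀, hk₀⟩ := eventually_atTop.1 <|
    (eventually_all.2 fun i => (tendsto_id.atTop_mul_const_of_neg (hlneg i)).eventually_le_atBot
      (-1)).and <| eventually_all.2 fun i =>
      eventually_abs_inv_mul_pow_mul_abs_luenbergerRemainder_sub_le hCx hCθ hA hB hC r (lam i)
        (b i) hε0
  refine ⟨max k₀ 1, c * LH / 2, by positivity, by positivity, fun k hk => ?_⟩
  obtain ⟨hlam, hrem⟩ := hk₀ k ((le_max_left _ _).trans hk.le)
  have hk1 : 1 ≤ k := (le_max_right _ _).trans hk.le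
  have hlam0 : ∀ i, k * lam i ≠ 0 := fun i => ((hlam i).trans_lt neg_one_lt_zero).ne
  refine ⟨fun i θ hθ => (Matrix.isUnit_iff_isUnit_det _).1
    (isUnit_sub_smul_one (hlam0 i) ((hrem i).1 θ hθ)), ?_⟩
  rintro w rfl hw t₁ ht₁ hU x hx x' hx' θ hθ θ' hθ'
  set D := cNorm (x - x') (θ - θ')
  have hD : 0 ≤ D := Real.sqrt_nonneg _
  have hδ : ∀ i, _ ≤ ε / k ^ r * D := fun i => (hrem i).2 _
    ((abs_filterRemainder_le i.pos (hlam i) hu hub (hw i) hτ ht₁).trans (le_max_right _ _)) _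
    (fun l hl => (hub l hl t₁ (hτ.le.trans ht₁)).trans (le_max_left _ _)) x hx x' hx' θ hθ θ' hθ'
  calc c * LH / 2 / k ^ r * D ≤ c / k ^ r * (LH * D) - ε / k ^ r * D * N := by
        have hscaled : N * ε * (D / k ^ r) ≤ c * LH / 2 * (D / k ^ r) := by gcongr
        linear_combination hscaled
    _ ≤ c / k ^ r * eNorm (HH n q r A B C x' θ' (fun j => u j t₁) -
          HH n q r A B C x θ (fun j => u j t₁)) - ε / k ^ r * D * N := by
        gcongr
        exact hinj x hx x' hx' θ hθ θ' hθ' _ hU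
    _ ≤ _ := mul_eNorm_HH_sub_sub_le_eNorm_luenbergerMap_sub hlam0 (fun i => (hrem i).1 θ hθ)
        (fun i => (hrem i).1 θ' hθ') x x' (fun l => u l t₁) (w t₁) (hc k hk1) (by positivity) hδ

end HighGain

theorem hasDerivAt_iteratedDeriv {f : ℝ → ℝ} {m l : ℕ} (hf : ContDiff ℝ m f) (hl : l < m) (t : ℝ) :
    HasDerivAt (iteratedDeriv l f) (iteratedDeriv (l + 1) f t) t := by
  rw [iteratedDeriv_succ]
  exact (hf.differentiable_iteratedDeriv l (mod_cast hl) t).hasDerivAt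

/-- Theorem 2, injectivity of `T` for high-gain eigenvalues. -/
theorem injectivity_of_T_high_gain
    (n q r : ℕ) (hr : 2 ≤ r)
    (Θ : Set (Fin q → ℝ))
    (A : (Fin q → ℝ) → Matrix (Fin n) (Fin n) ℝ)
    (B : (Fin q → ℝ) → (Fin n → ℝ))
    (C : (Fin q → ℝ) → (Fin n → ℝ))
    (hA : ContDiff ℝ 1 A) (hB : ContDiff ℝ 1 B) (hC : ContDiff ℝ 1 C)
    -- bounded open sets with `closure Cθ ⊆ Θ`
    (Cx : Set (Fin n → ℝ)) (Cθ : Set (Fin q → ℝ))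
    (hCxo : IsOpen Cx) (hCxb : Bornology.IsBounded Cx)
    (hCθo : IsOpen Cθ) (hCθb : Bornology.IsBounded Cθ) (hCθΘ : closure Cθ ⊆ Θ)
    -- Assumption 1 : uniform differential injectivity
    (U : Set (Fin (r - 1) → ℝ)) (hU : Bornology.IsBounded U)
    (LH : ℝ) (hLH : 0 < LH)
    (hinj : ∀ x ∈ closure Cx, ∀ x' ∈ closure Cx, ∀ θ ∈ closure Cθ, ∀ θ' ∈ closure Cθ,
        ∀ v ∈ U,
        eNorm (HH n q r A B C x' θ' v - HH n q r A B C x θ v)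
          ≥ LH * cNorm (x - x') (θ - θ'))
    -- the input and its bound
    (u : ℝ → ℝ) (hu : ContDiff ℝ (r - 1 : ℕ) u) (𝔲 : ℝ) (h𝔲 : 0 < 𝔲)
    (hub : ∀ t ≥ (0 : ℝ), eNorm (fun i : Fin r => iteratedDeriv (i : ℕ) u t) ≤ 𝔲)
    -- distinct negative real numbers, τ and w₀
    (lamt : Fin r → ℝ) (hlneg : ∀ i, lamt i < 0) (hldist : Function.Injective lamt)
    (τ : ℝ) (hτ : 0 < τ) (w0 : Fin r → ℝ) :
    ∃ kstar Lbar : ℝ, 0 < kstar ∧ 0 < Lbar ∧ ∀ k > kstar,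
      -- for k > k*, the λ_i = k λ̃_i are not eigenvalues of A(θ) on the closure of Cθ
      (∀ i : Fin r, ∀ θ ∈ closure Cθ,
          IsUnit (A θ - (k * lamt i) • (1 : Matrix (Fin n) (Fin n) ℝ)).det) ∧
      -- and the injectivity bound holds along the filter solution w
      ∀ w : ℝ → Fin r → ℝ, w 0 = w0 →
        (∀ (t : ℝ) (i : Fin r),
            HasDerivAt (fun s => w s i) (k * lamt i * w t i + u t) t) →
        ∀ t₁ ≥ τ, (fun j : Fin (r - 1) => iteratedDeriv (j : ℕ) u t₁) ∈ U →
        ∀ x ∈ Cx, ∀ x' ∈ Cx, ∀ θ ∈ Cθ, ∀ θ' ∈ Cθ,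
          eNorm (fun i : Fin r =>
              Matrix.vecMul (C θ)
                  (A θ - (k * lamt i) • (1 : Matrix (Fin n) (Fin n) ℝ))⁻¹
                ⬝ᵥ (x - w t₁ i • B θ)
              - Matrix.vecMul (C θ')
                  (A θ' - (k * lamt i) • (1 : Matrix (Fin n) (Fin n) ℝ))⁻¹
                ⬝ᵥ (x' - w t₁ i • B θ'))
            ≥ (Lbar / k ^ r) * cNorm (x - x') (θ - θ') := by
  obtain ⟨kstar, Lbar, hkstar, hLbar, h⟩ := injectivity_of_T_high_gain_general
    (u := fun l => iteratedDeriv l u) hA.locallyLipschitz.locallyLipschitzOn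
    hB.locallyLipschitz.locallyLipschitzOn hC.locallyLipschitz.locallyLipschitzOn hCxb
    hCθb.isCompact_closure hLH
    (fun x hx x' hx' => hinj x (subset_closure hx) x' (subset_closure hx'))
    (fun l hl t _ => (hasDerivAt_iteratedDeriv hu (Nat.lt_sub_of_add_lt hl) t).hasDerivWithinAt)
    (fun l hl t ht => (abs_apply_le_eNorm _ (⟨l, hl⟩ : Fin r)).trans (hub t ht))
    hlneg hldist hτ w0
  refine ⟨kstar, Lbar, hkstar, hLbar, fun k hk => ⟨(h k hk).1, ?_⟩⟩
  intro w hw0 hw t₁ ht₁ hU x hx x' hx' θ hθ θ' hθ'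
  exact (h k hk).2 w hw0 (fun i t _ => by simpa using (hw t i).hasDerivWithinAt) t₁ ht₁ hU
    x hx x' hx' θ (subset_closure hθ) θ' (subset_closure hθ')
end

section
/- Asymptotic expansion of the filter state. Let r ≥ 2, let λ < 0 and let u: [0,∞) → R be of class C^{r−1} with |u^{(j)}(t)| ≤ 𝔲 for all t ≥ 0 and all 0 ≤ j ≤ r−1. Let w: [0,∞) → R be a C^1 solution of ẇ(t) = λ w(t) + u(t). Then for all t ≥ 0, w(t) = − Σ_{j=0}^{r−2} u^{(j)}(t)/λ^{j+1} + R_w(t), where R_w(t) = e^{λ t}( w(0) + Σ_{j=0}^{r−2} u^{(j)}(0)/λ^{j+1} ) + λ^{−(r−1)} ∫_0^t e^{λ(t−s)} u^{(r−1)}(s) ds, and |R_w(t)| ≤ e^{λ t} | w(0) + Σ_{j=0}^{r−2} u^{(j)}(0)/λ^{j+1} | + 𝔲/|λ|^r. -/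
open scoped BigOperators

/-- The remainder term `R_w(t)` in the asymptotic expansion of the filter state. -/
noncomputable def Rw (r : ℕ) (lam : ℝ) (u w : ℝ → ℝ) (t : ℝ) : ℝ :=
  Real.exp (lam * t)
      * (w 0 + ∑ j ∈ Finset.range (r - 1), iteratedDeriv j u 0 / lam ^ (j + 1))
    + lam⁻¹ ^ (r - 1)
      * ∫ s in (0 : ℝ)..t, Real.exp (lam * (t - s)) * iteratedDeriv (r - 1) u s

/-!
Writing `D` for differentiation, `ẇ = λ w + u` reads `w = -(λ - D)⁻¹ u` formally, and
`-∑ Dʲ u / λ ^ (j + 1)` is the Neumann series of the right-hand side. Truncating it after `n` terms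
leaves the error `z = w + ∑_{j < n} Dʲ u / λ ^ (j + 1)`, which by telescoping solves the same
equation with the forcing `u` replaced by `λ⁻ⁿ Dⁿ u`. Variation of constants then gives `z`, and as
`λ < 0` the exponential kernel has mass at most `1 / |λ|`.
-/

open Set

variable {E : Type*} [NormedAddCommGroup E] [NormedSpace ℝ E]

section VariationOfConstants

variable {lam a b : ℝ}

theorem hasDerivAt_exp_mul_const_sub (lam b s : ℝ) :
    HasDerivAt (fun s ↦ Real.exp (lam * (b - s))) (-lam * Real.exp (lam * (b - s))) s := by
  have h := (((hasDerivAt_id' s).const_sub b).const_mul lam).exp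
  exact h.congr_deriv (by ring)

theorem continuous_exp_mul_const_sub (lam b : ℝ) :
    Continuous fun s ↦ Real.exp (lam * (b - s)) := by
  fun_prop

theorem eq_exp_smul_add_integral_of_hasDerivWithinAt [CompleteSpace E] {z f : ℝ → E} (hab : a ≤ b)
    (hz : ∀ s ∈ Icc a b, HasDerivWithinAt z (lam • z s + f s) (Icc a b) s)
    (hf : IntervalIntegrable f MeasureTheory.volume a b) :
    z b = Real.exp (lam * (b - a)) • z a + ∫ s in a..b, Real.exp (lam * (b - s)) • f s := by
  have hcont : ContinuousOn (fun s ↦ Real.exp (lam * (b - s)) • z s) (Icc a b) :=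
    (continuous_exp_mul_const_sub lam b).continuousOn.smul
      fun s hs ↦ (hz s hs).continuousWithinAt
  have hderiv : ∀ s ∈ Ioo a b, HasDerivAt (fun s ↦ Real.exp (lam * (b - s)) • z s)
      (Real.exp (lam * (b - s)) • f s) s := fun s hs ↦ by
    have hzs := (hz s (Ioo_subset_Icc_self hs)).hasDerivAt (Icc_mem_nhds hs.1 hs.2)
    exact ((hasDerivAt_exp_mul_const_sub lam b s).smul hzs).congr_deriv (by module)
  have hint := intervalIntegral.integral_eq_sub_of_hasDerivAt_of_le hab hcont hderiv
    (hf.continuousOn_smul (continuous_exp_mul_const_sub lam b).continuousOn)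
  rw [hint, sub_self, mul_zero, Real.exp_zero, one_smul, add_sub_cancel]

theorem integral_exp_mul_const_sub (hlam : lam ≠ 0) (a b : ℝ) :
    ∫ s in a..b, Real.exp (lam * (b - s)) = (Real.exp (lam * (b - a)) - 1) / lam := by
  rw [intervalIntegral.integral_comp_sub_left (fun s ↦ Real.exp (lam * s)),
    intervalIntegral.integral_comp_mul_left Real.exp hlam, integral_exp, sub_self, mul_zero,
    Real.exp_zero, smul_eq_mul, inv_mul_eq_div]

theorem norm_integral_exp_smul_le (hlam : lam ≠ 0) (hab : a ≤ b) {f : ℝ → E} {M : ℝ}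
    (hf : ∀ s ∈ Ioc a b, ‖f s‖ ≤ M) :
    ‖∫ s in a..b, Real.exp (lam * (b - s)) • f s‖
      ≤ (Real.exp (lam * (b - a)) - 1) / lam * M := by
  rw [← integral_exp_mul_const_sub hlam, ← intervalIntegral.integral_mul_const]
  refine intervalIntegral.norm_integral_le_of_norm_le hab (.of_forall fun s hs ↦ ?_)
    (((continuous_exp_mul_const_sub lam b).mul_const M).intervalIntegrable a b)
  rw [norm_smul, Real.norm_of_nonneg (Real.exp_pos _).le]
  gcongr
  exact hf s hs

theorem norm_integral_exp_smul_le_div_abs (hlam : lam < 0) (hab : a ≤ b) {f : ℝ → E} {M : ℝ}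
    (hM : 0 ≤ M) (hf : ∀ s ∈ Ioc a b, ‖f s‖ ≤ M) :
    ‖∫ s in a..b, Real.exp (lam * (b - s)) • f s‖ ≤ M / |lam| := by
  have hmass : (Real.exp (lam * (b - a)) - 1) / lam ≤ 1 / |lam| := by
    rw [← neg_div_neg_eq, ← abs_of_neg hlam]
    gcongr
    linarith [Real.exp_pos (lam * (b - a))]
  calc ‖∫ s in a..b, Real.exp (lam * (b - s)) • f s‖
      ≤ (Real.exp (lam * (b - a)) - 1) / lam * M := norm_integral_exp_smul_le hlam.ne hab hf
    _ ≤ 1 / |lam| * M := by gcongr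
    _ = M / |lam| := one_div_mul_eq_div _ _

end VariationOfConstants

section NeumannExpansion

/-- The `n`-th partial sum of the Neumann series `(lam - D)⁻¹ u = ∑ j, Dʲ u / lam ^ (j + 1)`, where
`v j` stands for the `j`-th derivative `Dʲ u`. Taking the sequence `v` as the datum leaves open in
which sense (two-sided, or within a set) the derivatives are formed. -/
noncomputable def neumannSum (lam : ℝ) (v : ℕ → ℝ → E) (n : ℕ) (t : ℝ) : E :=
  ∑ j ∈ Finset.range n, (lam ^ (j + 1))⁻¹ • v j t

/-- The remainder of the order-`n` Neumann expansion of a solution `w` of `ẇ = lam w + v 0`, where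
`v j` stands for the `j`-th derivative of the forcing `v 0`. It is the vector-valued form of `Rw`,
indexed by the number `n = r - 1` of terms. -/
noncomputable def neumannRemainder (lam : ℝ) (v : ℕ → ℝ → E) (n : ℕ) (w : ℝ → E) (t : ℝ) : E :=
  Real.exp (lam * t) • (w 0 + neumannSum lam v n 0)
    + (lam ^ n)⁻¹ • ∫ s in (0 : ℝ)..t, Real.exp (lam * (t - s)) • v n s

variable {lam : ℝ} {v : ℕ → ℝ → E} {n : ℕ} {w : ℝ → E}

theorem neumannSum_zero (lam : ℝ) (v : ℕ → ℝ → E) (t : ℝ) : neumannSum lam v 0 t = 0 :=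
  Finset.sum_range_zero _

theorem neumannSum_succ (lam : ℝ) (v : ℕ → ℝ → E) (n : ℕ) (t : ℝ) :
    neumannSum lam v (n + 1) t = neumannSum lam v n t + (lam ^ (n + 1))⁻¹ • v n t :=
  Finset.sum_range_succ _ n

theorem hasDerivWithinAt_neumannSum (hlam : lam ≠ 0) {S : Set ℝ} {s : ℝ}
    (hv : ∀ j < n, HasDerivWithinAt (v j) (v (j + 1) s) S s) :
    HasDerivWithinAt (neumannSum lam v n)
      (lam • neumannSum lam v n s - v 0 s + (lam ^ n)⁻¹ • v n s) S s := by
  induction n with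
  | zero =>
    rw [funext (neumannSum_zero lam v)]
    exact (hasDerivWithinAt_const s S 0).congr_deriv (by simp)
  | succ n ih =>
    have hsum := ih fun j hj ↦ hv j (hj.trans n.lt_succ_self)
    have hterm := (hv n n.lt_succ_self).const_smul (lam ^ (n + 1))⁻¹
    have hpow : lam * (lam ^ (n + 1))⁻¹ = (lam ^ n)⁻¹ := by
      rw [pow_succ', mul_inv, mul_inv_cancel_left₀ hlam]
    rw [funext (neumannSum_succ lam v n)]
    refine (hsum.add hterm).congr_deriv ?_
    rw [smul_add, smul_smul, hpow]
    abel

theorem hasDerivWithinAt_add_neumannSum (hlam : lam ≠ 0) {S : Set ℝ} {s : ℝ}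
    (hv : ∀ j < n, HasDerivWithinAt (v j) (v (j + 1) s) S s)
    (hw : HasDerivWithinAt w (lam • w s + v 0 s) S s) :
    HasDerivWithinAt (w + neumannSum lam v n)
      (lam • (w + neumannSum lam v n) s + (lam ^ n)⁻¹ • v n s) S s :=
  (hw.add (hasDerivWithinAt_neumannSum hlam hv)).congr_deriv (by rw [Pi.add_apply]; module)

theorem eq_neg_neumannSum_add_neumannRemainder [CompleteSpace E] (hlam : lam ≠ 0) {t : ℝ}
    (ht : 0 ≤ t)
    (hv : ∀ j < n, ∀ s ∈ Icc 0 t, HasDerivWithinAt (v j) (v (j + 1) s) (Icc 0 t) s)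
    (hvn : IntervalIntegrable (v n) MeasureTheory.volume 0 t)
    (hw : ∀ s ∈ Icc 0 t, HasDerivWithinAt w (lam • w s + v 0 s) (Icc 0 t) s) :
    w t = -neumannSum lam v n t + neumannRemainder lam v n w t := by
  have herror := eq_exp_smul_add_integral_of_hasDerivWithinAt ht
    (fun s hs ↦ hasDerivWithinAt_add_neumannSum hlam (fun j hj ↦ hv j hj s hs) (hw s hs))
    (hvn.smul (lam ^ n)⁻¹)
  simp only [Pi.add_apply, sub_zero, smul_comm _ (lam ^ n)⁻¹,
    intervalIntegral.integral_smul] at herror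
  rw [neumannRemainder, ← herror, add_comm (w t), neg_add_cancel_left]

theorem norm_neumannRemainder_le (hlam : lam < 0) {t : ℝ} (ht : 0 ≤ t) {M : ℝ} (hM : 0 ≤ M)
    (hvn : ∀ s ∈ Ioc 0 t, ‖v n s‖ ≤ M) :
    ‖neumannRemainder lam v n w t‖
      ≤ Real.exp (lam * t) * ‖w 0 + neumannSum lam v n 0‖ + M / |lam| ^ (n + 1) := by
  have hintegral := norm_integral_exp_smul_le_div_abs hlam ht hM hvn
  calc ‖neumannRemainder lam v n w t‖
      ≤ Real.exp (lam * t) * ‖w 0 + neumannSum lam v n 0‖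
        + (|lam| ^ n)⁻¹ * ‖∫ s in (0 : ℝ)..t, Real.exp (lam * (t - s)) • v n s‖ := by
        refine (norm_add_le _ _).trans_eq ?_
        simp only [norm_smul, norm_inv, norm_pow, Real.norm_eq_abs, Real.abs_exp]
    _ ≤ Real.exp (lam * t) * ‖w 0 + neumannSum lam v n 0‖ + (|lam| ^ n)⁻¹ * (M / |lam|) := by
        gcongr
    _ = Real.exp (lam * t) * ‖w 0 + neumannSum lam v n 0‖ + M / |lam| ^ (n + 1) := by
        rw [inv_mul_eq_div, div_div, pow_succ']

theorem filter_state_expansion_general [CompleteSpace E] (hlam : lam < 0)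
    (hv : ∀ j < n, ∀ s ≥ 0, HasDerivWithinAt (v j) (v (j + 1) s) (Ici 0) s)
    (hvn : ContinuousOn (v n) (Ici 0)) {M : ℝ} (hM : ∀ s ≥ 0, ‖v n s‖ ≤ M)
    (hw : ∀ s ≥ 0, HasDerivWithinAt w (lam • w s + v 0 s) (Ici 0) s) :
    ∀ t ≥ 0, w t = -neumannSum lam v n t + neumannRemainder lam v n w t ∧
      ‖neumannRemainder lam v n w t‖
        ≤ Real.exp (lam * t) * ‖w 0 + neumannSum lam v n 0‖ + M / |lam| ^ (n + 1) := by
  refine fun t ht ↦ ⟨eq_neg_neumannSum_add_neumannRemainder hlam.ne ht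
      (fun j hj s hs ↦ (hv j hj s hs.1).mono Icc_subset_Ici_self)
      ((hvn.mono Icc_subset_Ici_self).intervalIntegrable_of_Icc ht)
      fun s hs ↦ (hw s hs.1).mono Icc_subset_Ici_self,
    norm_neumannRemainder_le hlam ht ?_ fun s hs ↦ hM s hs.1.le⟩
  exact (norm_nonneg (v n 0)).trans (hM 0 le_rfl)

end NeumannExpansion

theorem neumannSum_iteratedDeriv (lam : ℝ) (u : ℝ → ℝ) (n : ℕ) (t : ℝ) :
    neumannSum lam (iteratedDeriv · u) n t
      = ∑ j ∈ Finset.range n, iteratedDeriv j u t / lam ^ (j + 1) := by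
  simp only [neumannSum, smul_eq_mul, inv_mul_eq_div]

theorem neumannRemainder_iteratedDeriv (r : ℕ) (lam : ℝ) (u w : ℝ → ℝ) (t : ℝ) :
    neumannRemainder lam (iteratedDeriv · u) (r - 1) w t = Rw r lam u w t := by
  simp only [neumannRemainder, neumannSum_iteratedDeriv, Rw, smul_eq_mul, inv_pow]

theorem hasDerivAt_iteratedDeriv_s4 {u : ℝ → E} {n : ℕ} (hu : ContDiff ℝ n u) {j : ℕ} (hj : j < n)
    (s : ℝ) : HasDerivAt (iteratedDeriv j u) (iteratedDeriv (j + 1) u s) s := by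
  rw [iteratedDeriv_succ]
  exact (hu.differentiable_iteratedDeriv j (mod_cast hj) s).hasDerivAt

/-- asymptotic expansion of the filter state.
If `ẇ = λ w + u` with `λ < 0` and `u` of class `C^{r−1}` with all derivatives up to
order `r−1` bounded by `𝔲` on `[0,∞)`, then
`w(t) = − Σ_{j=0}^{r−2} u^{(j)}(t)/λ^{j+1} + R_w(t)`, with
`|R_w(t)| ≤ e^{λt} |w(0) + Σ_{j=0}^{r−2} u^{(j)}(0)/λ^{j+1}| + 𝔲/|λ|^r`. -/
theorem filter_state_expansion
    (r : ℕ) (hr : 2 ≤ r) (lam : ℝ) (hlam : lam < 0)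
    (u : ℝ → ℝ) (hu : ContDiff ℝ (r - 1 : ℕ) u)
    (𝔲 : ℝ)
    (hub : ∀ t ≥ (0 : ℝ), ∀ j ≤ r - 1, |iteratedDeriv j u t| ≤ 𝔲)
    (w : ℝ → ℝ)
    (hw : ∀ t ≥ (0 : ℝ), HasDerivAt w (lam * w t + u t) t) :
    ∀ t ≥ (0 : ℝ),
      w t = -(∑ j ∈ Finset.range (r - 1), iteratedDeriv j u t / lam ^ (j + 1))
              + Rw r lam u w t ∧
      |Rw r lam u w t|
        ≤ Real.exp (lam * t)
              * |w 0 + ∑ j ∈ Finset.range (r - 1), iteratedDeriv j u 0 / lam ^ (j + 1)|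
          + 𝔲 / |lam| ^ r := by
  have hexpansion := filter_state_expansion_general (v := (iteratedDeriv · u)) hlam
    (fun j hj s _ ↦ (hasDerivAt_iteratedDeriv_s4 hu hj s).hasDerivWithinAt)
    (hu.continuous_iteratedDeriv (r - 1) le_rfl).continuousOn
    (fun s hs ↦ hub s hs (r - 1) le_rfl) fun s hs ↦ by
      simpa only [iteratedDeriv_zero, smul_eq_mul] using (hw s hs).hasDerivWithinAt
  simpa only [neumannSum_iteratedDeriv, neumannRemainder_iteratedDeriv, Real.norm_eq_abs,
    Nat.sub_add_cancel (one_le_two.trans hr)] using hexpansion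
end

section
/- McShane left inverse (Proposition 1). Let C_x ⊂ R^n and C_θ ⊂ R^q be bounded open sets, C_w any set, and T: Cl(C_x) × Cl(C_θ) × C_w → R^r a map such that for some L_T > 0, |T(x,θ,w) − T(x*,θ*,w)| ≥ L_T |(x−x*, θ−θ*)| for all (x,θ), (x*,θ*) ∈ Cl(C_x)×Cl(C_θ) and all w ∈ C_w. Define T*: R^r × C_w → R^n × R^q componentwise by T*_{x_i}(z,w) = inf_{(x,θ) ∈ Cl(C_x×C_θ)} { x_i + (1/L_T)|T(x,θ,w) − z| } and T*_{θ_j}(z,w) = inf_{(x,θ) ∈ Cl(C_x×C_θ)} { θ_j + (1/L_T)|T(x,θ,w) − z| }. Then for all z ∈ R^r, (x,θ) ∈ C_x × C_θ and w ∈ C_w: |T*(z,w) − (x,θ)| ≤ (√(n+q)/L_T) |z − T(x,θ,w)|. -/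
open scoped BigOperators

/-!
Since `T` expands distances by at least `L`, each coordinate of its argument is an `L⁻¹`-Lipschitz
function of its value. McShane's infimum extends this function from the range of `T` to the whole
space with the same Lipschitz bound relative to points of the range. Each coordinate of `T*` thus
has error at most `L⁻¹ |z - T(x, θ)|`, and summing `n + q` squares gives the factor `√(n + q)`.
-/

section McShane

variable {X Y ι κ : Type*} [PseudoMetricSpace Y] {T : X → Y} {s : Set X} {K : ℝ}

/-- McShane's extension to `Y` of the function `T x ↦ u x` on `T '' s`, with constant `K`. The
extended function is encoded by the pair `(T, u)`, so that no inverse of `T` is needed. The infimum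
is the real `sInf`, hence `0` if `s` is empty or the values are not bounded below. -/
noncomputable def mcshaneExtension (K : ℝ) (T : X → Y) (u : X → ℝ) (s : Set X) (z : Y) : ℝ :=
  sInf ((fun x => u x + K * dist (T x) z) '' s)

theorem mcshaneExtension_prod {X₁ X₂ : Type*} (K : ℝ) (T : X₁ × X₂ → Y) (u : X₁ × X₂ → ℝ)
    (A : Set X₁) (B : Set X₂) (z : Y) :
    mcshaneExtension K T u (A ×ˢ B) z =
      sInf {y | ∃ a ∈ A, ∃ b ∈ B, y = u (a, b) + K * dist (T (a, b)) z} := by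
  simp only [mcshaneExtension, Set.image, Prod.exists, Set.mem_prod, and_assoc, exists_and_left,
    eq_comm]

theorem abs_mcshaneExtension_sub_le {u : X → ℝ} (hK : 0 ≤ K)
    (hu : ∀ x ∈ s, ∀ y ∈ s, u x - u y ≤ K * dist (T x) (T y)) (z : Y) {x : X} (hx : x ∈ s) :
    |mcshaneExtension K T u s z - u x| ≤ K * dist z (T x) := by
  have lower : ∀ v ∈ (fun y => u y + K * dist (T y) z) '' s, u x - K * dist z (T x) ≤ v := by
    rintro _ ⟨y, hy, rfl⟩
    have triangle : K * dist (T x) (T y) ≤ K * (dist z (T x) + dist (T y) z) := by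
      gcongr
      exact dist_comm z (T x) ▸ dist_triangle_right (T x) (T y) z
    linarith [hu x hx y hy]
  have mem : u x + K * dist z (T x) ∈ (fun y => u y + K * dist (T y) z) '' s :=
    ⟨x, hx, by rw [dist_comm]⟩
  rw [abs_sub_le_iff, sub_le_iff_le_add', sub_le_comm]
  exact ⟨csInf_le ⟨_, lower⟩ mem, le_csInf ⟨_, mem⟩ lower⟩

theorem euclidean_dist_le_sqrt_card_mul [Fintype ι] {x y : EuclideanSpace ℝ ι} {C : ℝ}
    (hC : 0 ≤ C) (h : ∀ i, |x i - y i| ≤ C) : dist x y ≤ √(Fintype.card ι) * C := by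
  calc dist x y = √(∑ i, |x i - y i| ^ 2) := by simp only [EuclideanSpace.dist_eq, Real.dist_eq]
    _ ≤ √(∑ _i : ι, C ^ 2) := by gcongr with i; exact h i
    _ = √(Fintype.card ι) * C := by
      rw [Finset.sum_const, Finset.card_univ, nsmul_eq_mul, Real.sqrt_mul (by positivity),
        Real.sqrt_sq hC]

theorem dist_toLp_mcshaneExtension_le [Fintype ι] {u : X → EuclideanSpace ℝ ι} (hK : 0 ≤ K)
    (hu : ∀ x ∈ s, ∀ y ∈ s, dist (u x) (u y) ≤ K * dist (T x) (T y)) (z : Y) {x : X}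
    (hx : x ∈ s) :
    dist (WithLp.toLp 2 fun i => mcshaneExtension K T (u · i) s z) (u x) ≤
      √(Fintype.card ι) * (K * dist z (T x)) := by
  refine euclidean_dist_le_sqrt_card_mul (by positivity) fun i =>
    abs_mcshaneExtension_sub_le hK (fun a ha b hb => ?_) z hx
  calc u a i - u b i ≤ ‖(u a - u b) i‖ := le_abs_self _
    _ ≤ dist (u a) (u b) := dist_eq_norm (u a) (u b) ▸ PiLp.norm_apply_le _ i
    _ ≤ K * dist (T a) (T b) := hu a ha b hb

theorem dist_toLp_sumElim [Fintype ι] [Fintype κ] (x x' : ι → ℝ) (θ θ' : κ → ℝ) :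
    dist (WithLp.toLp 2 (Sum.elim x θ)) (WithLp.toLp 2 (Sum.elim x' θ')) =
      √(∑ i, (x i - x' i) ^ 2 + ∑ j, (θ j - θ' j) ^ 2) := by
  simp only [EuclideanSpace.dist_eq, Real.dist_eq, sq_abs, Fintype.sum_sum_type, Sum.elim_inl,
    Sum.elim_inr]

theorem mcshane_left_inverse_general [Fintype ι] [Fintype κ] {T : (ι → ℝ) × (κ → ℝ) → Y}
    {s : Set ((ι → ℝ) × (κ → ℝ))} {L : ℝ} (hL : 0 < L)
    (hT : ∀ p ∈ s, ∀ p' ∈ s,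
      L * √(∑ i, (p.1 i - p'.1 i) ^ 2 + ∑ j, (p.2 j - p'.2 j) ^ 2) ≤ dist (T p) (T p'))
    (z : Y) {p : (ι → ℝ) × (κ → ℝ)} (hp : p ∈ s) :
    √(∑ i, (mcshaneExtension (1 / L) T (·.1 i) s z - p.1 i) ^ 2 +
        ∑ j, (mcshaneExtension (1 / L) T (·.2 j) s z - p.2 j) ^ 2) ≤
      √(Fintype.card ι + Fintype.card κ) / L * dist z (T p) := by
  let u (p : (ι → ℝ) × (κ → ℝ)) : EuclideanSpace ℝ (ι ⊕ κ) := WithLp.toLp 2 (Sum.elim p.1 p.2)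
  have hu : ∀ a ∈ s, ∀ b ∈ s, dist (u a) (u b) ≤ 1 / L * dist (T a) (T b) := fun a ha b hb => by
    rw [dist_toLp_sumElim, one_div, le_inv_mul_iff₀ hL]
    exact hT a ha b hb
  have bound := dist_toLp_mcshaneExtension_le (by positivity) hu z hp
  simp only [EuclideanSpace.dist_eq, Real.dist_eq, sq_abs, Fintype.sum_sum_type, u, Sum.elim_inl,
    Sum.elim_inr, Fintype.card_sum, Nat.cast_add] at bound
  rwa [← mul_assoc, mul_one_div] at bound

end McShane

theorem eNorm_sub_eq_dist {m : ℕ} (x y : Fin m → ℝ) :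
    eNorm (x - y) = dist (WithLp.toLp 2 x) (WithLp.toLp 2 y) := by
  simp only [eNorm, EuclideanSpace.dist_eq, Real.dist_eq, sq_abs, Pi.sub_apply]

/-- Proposition 1, McShane left inverse.
If `T` satisfies the uniform injectivity bound
`|T(x,θ,w) − T(x*,θ*,w)| ≥ L_T |(x−x*, θ−θ*)|` on `Cl(C_x)×Cl(C_θ)` for every `w ∈ C_w`
(and is continuous there), then the McShane-type function `T*` defined componentwise by
infima satisfies `|T*(z,w) − (x,θ)| ≤ (√(n+q)/L_T) |z − T(x,θ,w)|`. -/
theorem mcshane_left_inverse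
    {W : Type*} (n q r : ℕ)
    (Cx : Set (Fin n → ℝ)) (Cθ : Set (Fin q → ℝ)) (Cw : Set W)
    (hCxo : IsOpen Cx) (hCxb : Bornology.IsBounded Cx)
    (hCθo : IsOpen Cθ) (hCθb : Bornology.IsBounded Cθ)
    (T : (Fin n → ℝ) → (Fin q → ℝ) → W → (Fin r → ℝ))
    (hTcont : ∀ w ∈ Cw,
      ContinuousOn (fun p : (Fin n → ℝ) × (Fin q → ℝ) => T p.1 p.2 w)
        ((closure Cx) ×ˢ (closure Cθ)))
    (LT : ℝ) (hLT : 0 < LT)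
    (hinj : ∀ x ∈ closure Cx, ∀ x' ∈ closure Cx, ∀ θ ∈ closure Cθ, ∀ θ' ∈ closure Cθ,
        ∀ w ∈ Cw,
        eNorm (T x θ w - T x' θ' w)
          ≥ LT * Real.sqrt (∑ i, (x i - x' i) ^ 2 + ∑ j, (θ j - θ' j) ^ 2))
    -- the McShane components of `T*`
    (TstarX : (Fin r → ℝ) → W → (Fin n → ℝ))
    (hTstarX : ∀ z w i, TstarX z w i
      = sInf {y : ℝ | ∃ x' ∈ closure Cx, ∃ θ' ∈ closure Cθ,
          y = x' i + (1 / LT) * eNorm (T x' θ' w - z)})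
    (TstarTheta : (Fin r → ℝ) → W → (Fin q → ℝ))
    (hTstarTheta : ∀ z w j, TstarTheta z w j
      = sInf {y : ℝ | ∃ x' ∈ closure Cx, ∃ θ' ∈ closure Cθ,
          y = θ' j + (1 / LT) * eNorm (T x' θ' w - z)}) :
    ∀ (z : Fin r → ℝ), ∀ x ∈ Cx, ∀ θ ∈ Cθ, ∀ w ∈ Cw,
      Real.sqrt (∑ i, (TstarX z w i - x i) ^ 2 + ∑ j, (TstarTheta z w j - θ j) ^ 2)
        ≤ (Real.sqrt ((n : ℝ) + (q : ℝ)) / LT) * eNorm (z - T x θ w) := by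
  intro z x hx θ hθ w hw
  simpa only [eNorm_sub_eq_dist, mcshaneExtension_prod, hTstarX, hTstarTheta, Fintype.card_fin]
    using mcshane_left_inverse_general (T := fun p => WithLp.toLp 2 (T p.1 p.2 w)) hLT
      (fun p hp p' hp' => eNorm_sub_eq_dist (T p.1 p.2 w) _ ▸
        hinj p.1 hp.1 p'.1 hp'.1 p.2 hp.2 p'.2 hp'.2 w hw)
      (WithLp.toLp 2 z) (Set.mk_mem_prod (subset_closure hx) (subset_closure hθ))
end

section
/- Differential excitation implies persistent excitation (Proposition 3). Let r be a positive integer and u: R → R a C^{2r} function which is differentially exciting of order r at time t, i.e. the Hankel matrix 𝔐_r(ū^{(2r)}(t)) is invertible. Then there exist ε > 0 and ρ > 0 such that ∫_t^{t+ε} ū^{(r)}(s) (ū^{(r)}(s))^T ds ⪰ ρ I_{r+1}, i.e. for every ξ ∈ R^{r+1}, ∫_t^{t+ε} ⟨ξ, ū^{(r)}(s)⟩² ds ≥ ρ |ξ|². -/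
open scoped BigOperators

/-- The `(m+1)×(m+1)` Hankel matrix of a vector `v = (v_0, …, v_{2m}) ∈ ℝ^{2m+1}` :
entry `(i,j)` is `v_{i+j}`. -/
def hankelMat (m : ℕ) (v : Fin (2 * m + 1) → ℝ) : Matrix (Fin (m + 1)) (Fin (m + 1)) ℝ :=
  fun i j => v ⟨(i : ℕ) + (j : ℕ), by have := i.2; have := j.2; omega⟩

/-!
By finite dimensionality, the derivatives `u, u', …, u⁽ʳ⁾` satisfy `ρ |ξ|² ≤ ∫ (∑ ξᵢ u⁽ⁱ⁾)²` over
`(t, b]` for some `ρ > 0` as soon as they are linearly independent in `L²`, i.e. no nontrivial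
combination `g = ∑ ξᵢ u⁽ⁱ⁾` vanishes almost everywhere on `(t, b]`. If `g` does vanish, then by
continuity near `t` it is zero just to the right of `t`, so its one-sided derivatives at `t` are
zero as well. Those of order `0, …, r` are the entries of the Hankel matrix applied to `ξ`, so
invertibility of that matrix forces `ξ = 0`.
-/

open MeasureTheory Filter Set Topology

section Coercivity

variable {𝕜 ι : Type*} [RCLike 𝕜] [Fintype ι]

theorem exists_pos_mul_sum_norm_sq_le_norm_sq_sum_smul {V : Type*} [NormedAddCommGroup V]
    [NormedSpace 𝕜 V] {v : ι → V} (hv : LinearIndependent 𝕜 v) :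
    ∃ ρ > (0 : ℝ), ∀ ξ : ι → 𝕜, ρ * ∑ i, ‖ξ i‖ ^ 2 ≤ ‖∑ i, ξ i • v i‖ ^ 2 := by
  let L : EuclideanSpace 𝕜 ι →ₗ[𝕜] V :=
    Fintype.linearCombination 𝕜 v ∘ₗ (WithLp.linearEquiv 2 𝕜 (ι → 𝕜)).toLinearMap
  have hL : LinearMap.ker L = ⊥ := LinearMap.ker_eq_bot.mpr <|
    hv.fintypeLinearCombination_injective.comp (WithLp.linearEquiv 2 𝕜 (ι → 𝕜)).injective
  obtain ⟨K, hK, hanti⟩ := L.exists_antilipschitzWith hL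
  refine ⟨((K : ℝ) ^ 2)⁻¹, by positivity, fun ξ => ?_⟩
  have hbound : ‖WithLp.toLp 2 ξ‖ ≤ K * ‖∑ i, ξ i • v i‖ :=
    ZeroHomClass.bound_of_antilipschitz L hanti (WithLp.toLp 2 ξ)
  rw [inv_mul_le_iff₀ (by positivity), ← mul_pow]
  calc
    ∑ i, ‖ξ i‖ ^ 2 = ‖WithLp.toLp 2 ξ‖ ^ 2 := (EuclideanSpace.norm_sq_eq _).symm
    _ ≤ (K * ‖∑ i, ξ i • v i‖) ^ 2 := by gcongr

variable {α E : Type*} [MeasurableSpace α] {μ : Measure α} [NormedAddCommGroup E]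

theorem norm_sq_Lp_two_eq_integral_norm_sq (f : Lp E 2 μ) : ‖f‖ ^ 2 = ∫ x, ‖f x‖ ^ 2 ∂μ := by
  rw [Lp.norm_def, (Lp.memLp f).eLpNorm_eq_integral_rpow_norm two_ne_zero ENNReal.ofNat_ne_top,
    ENNReal.toReal_ofReal (by positivity), ← Real.rpow_natCast, ← Real.rpow_mul (by positivity)]
  simp

theorem coeFn_sum_smul_toLp [NormedSpace 𝕜 E] {p : ENNReal} {f : ι → α → E}
    (hf : ∀ i, MemLp (f i) p μ) (ξ : ι → 𝕜) :
    ⇑(∑ i, ξ i • (hf i).toLp) =ᵐ[μ] fun x => ∑ i, ξ i • f i x := by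
  have hterm : ∀ᵐ x ∂μ, ∀ i, (ξ i • (hf i).toLp : Lp E p μ) x = ξ i • f i x :=
    ae_all_iff.mpr fun i => by
      filter_upwards [Lp.coeFn_smul (ξ i) (hf i).toLp, (hf i).coeFn_toLp] with x hsmul hx
      rw [hsmul, Pi.smul_apply, hx]
  filter_upwards [Lp.coeFn_finsetSum Finset.univ fun i => ξ i • (hf i).toLp, hterm] with x hsum hx
  simp only [hsum, Finset.sum_apply, hx]

theorem exists_pos_mul_sum_norm_sq_le_integral_norm_sq [NormedSpace 𝕜 E] {f : ι → α → E}
    (hf : ∀ i, MemLp (f i) 2 μ)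
    (hind : ∀ ξ : ι → 𝕜, (∀ᵐ x ∂μ, ∑ i, ξ i • f i x = 0) → ξ = 0) :
    ∃ ρ > (0 : ℝ), ∀ ξ : ι → 𝕜,
      ρ * ∑ i, ‖ξ i‖ ^ 2 ≤ ∫ x, ‖∑ i, ξ i • f i x‖ ^ 2 ∂μ := by
  have hli : LinearIndependent 𝕜 fun i => (hf i).toLp := by
    refine Fintype.linearIndependent_iff.mpr fun ξ hξ => congrFun (hind ξ ?_)
    have hsum := coeFn_sum_smul_toLp hf ξ
    rw [hξ] at hsum
    exact hsum.symm.trans (Lp.coeFn_zero E 2 μ)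
  obtain ⟨ρ, hρ, hle⟩ := exists_pos_mul_sum_norm_sq_le_norm_sq_sum_smul hli
  refine ⟨ρ, hρ, fun ξ => (hle ξ).trans_eq ?_⟩
  rw [norm_sq_Lp_two_eq_integral_norm_sq]
  refine integral_congr_ae ?_
  filter_upwards [coeFn_sum_smul_toLp hf ξ] with x hx
  rw [hx]

end Coercivity

theorem memLp_restrict_of_continuousOn_of_isCompact {X E : Type*} [TopologicalSpace X]
    [MeasurableSpace X] [OpensMeasurableSpace X] {μ : Measure X} [IsFiniteMeasureOnCompacts μ]
    [NormedAddCommGroup E] {f : X → E} {K : Set X}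
    (hK : IsCompact K) (hKm : MeasurableSet K) (hf : ContinuousOn f K) (p : ENNReal) :
    MemLp f p (μ.restrict K) := by
  have : IsFiniteMeasure (μ.restrict K) := isFiniteMeasure_restrict.mpr hK.measure_ne_top
  obtain ⟨C, hC⟩ := hK.exists_bound_of_continuousOn hf
  exact .of_bound (hf.aestronglyMeasurable_of_isCompact hK hKm) C
    (ae_restrict_of_forall_mem hKm hC)

section OneSided

theorem eventuallyEq_nhdsGT_of_ae_eq_restrict_Ioc {Y : Type*} [TopologicalSpace Y] [T2Space Y]
    {f g : ℝ → Y} {t b : ℝ} (htb : t < b) (hf : ∀ᶠ s in 𝓝[>] t, ContinuousAt f s)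
    (hg : ∀ᶠ s in 𝓝[>] t, ContinuousAt g s) (hfg : f =ᵐ[volume.restrict (Ioc t b)] g) :
    f =ᶠ[𝓝[>] t] g := by
  obtain ⟨c, htc, hc⟩ := (mem_nhdsGT_iff_exists_Ioo_subset' htb).mp
    (inter_mem (inter_mem hf hg) (Ioo_mem_nhdsGT htb))
  have hsub : Ioo t c ⊆ Ioc t b := fun s hs => Ioo_subset_Ioc_self (hc hs).2
  have heq : EqOn f g (Ioo t c) :=
    Measure.eqOn_open_of_ae_eq (ae_restrict_of_ae_restrict_of_subset hsub hfg) isOpen_Ioo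
      (fun s hs => (hc hs).1.1.continuousWithinAt) (fun s hs => (hc hs).1.2.continuousWithinAt)
  exact heq.eventuallyEq_of_mem (Ioo_mem_nhdsGT htc)

theorem iteratedDeriv_eq_of_eventuallyEq_nhdsGT {F : Type*} [NormedAddCommGroup F]
    [NormedSpace ℝ F] {f g : ℝ → F} {t : ℝ} {n : ℕ} (hf : ContDiffAt ℝ n f t)
    (hg : ContDiffAt ℝ n g t) (hfg : f =ᶠ[𝓝[>] t] g) :
    iteratedDeriv n f t = iteratedDeriv n g t := by
  have hval : f t = g t := tendsto_nhds_unique_of_eventuallyEq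
    hf.continuousAt.continuousWithinAt hg.continuousAt.continuousWithinAt hfg
  have hfg' : f =ᶠ[𝓝[≥] t] g := by
    rw [← Ioi_insert, EventuallyEq, nhdsWithin_insert, eventually_sup]
    exact ⟨by simpa using hval, hfg⟩
  rw [← iteratedDerivWithin_eq_iteratedDeriv (uniqueDiffOn_Ici t) hf self_mem_Ici,
    ← iteratedDerivWithin_eq_iteratedDeriv (uniqueDiffOn_Ici t) hg self_mem_Ici,
    hfg'.iteratedDerivWithin_eq hval]

end OneSided

section IteratedDeriv

variable {𝕜 F : Type*} [NontriviallyNormedField 𝕜] [NormedAddCommGroup F] [NormedSpace 𝕜 F]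

theorem iteratedDeriv_iteratedDeriv (m n : ℕ) (f : 𝕜 → F) :
    iteratedDeriv m (iteratedDeriv n f) = iteratedDeriv (m + n) f := by
  simp only [iteratedDeriv_eq_iterate, Function.iterate_add_apply]

theorem contDiffAt_iteratedDeriv {f : 𝕜 → F} {x : 𝕜} {m n : WithTop ℕ∞} {i : ℕ}
    (hf : ContDiffAt 𝕜 n f x) (hmn : m + i ≤ n) : ContDiffAt 𝕜 m (iteratedDeriv i f) x := by
  rw [iteratedDeriv_eq_equiv_comp]
  exact (LinearIsometryEquiv.contDiff _).contDiffAt.comp x (hf.iteratedFDeriv_right hmn)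

theorem memLp_iteratedDeriv_restrict_Ioc {F : Type*} [NormedAddCommGroup F] [NormedSpace ℝ F]
    {f : ℝ → F} {n : WithTop ℕ∞} {i : ℕ} (hf : ContDiff ℝ n f) (hi : i ≤ n) (p : ENNReal)
    (a b : ℝ) : MemLp (iteratedDeriv i f) p (volume.restrict (Ioc a b)) :=
  (memLp_restrict_of_continuousOn_of_isCompact isCompact_Icc measurableSet_Icc
    (hf.continuous_iteratedDeriv i hi).continuousOn p).mono_measure
    (Measure.restrict_mono_set volume Ioc_subset_Icc_self)

end IteratedDeriv

/-- `u` is differentially exciting of order `r` at `t`: the Hankel matrix of the values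
`u(t), u'(t), …, u⁽²ʳ⁾(t)` is invertible, which is expressed through its determinant. No smoothness
of `u` is included, so the iterated derivatives may take their junk value `0`. -/
def DifferentiallyExcitingAt (r : ℕ) (u : ℝ → ℝ) (t : ℝ) : Prop :=
  IsUnit (hankelMat r (fun i : Fin (2 * r + 1) => iteratedDeriv (i : ℕ) u t)).det

section Excitation

variable {r : ℕ} {u : ℝ → ℝ} {t b : ℝ}

theorem contDiffAt_sum_mul_iteratedDeriv (hu : ContDiffAt ℝ (2 * r : ℕ) u t)
    (ξ : Fin (r + 1) → ℝ) :
    ContDiffAt ℝ r (fun s => ∑ i, ξ i * iteratedDeriv (i : ℕ) u s) t :=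
  ContDiffAt.sum fun i _ => contDiffAt_const.mul <|
    contDiffAt_iteratedDeriv hu <| by exact_mod_cast (by omega : r + (i : ℕ) ≤ 2 * r)

theorem hankelMat_mulVec_eq_iteratedDeriv_sum (hu : ContDiffAt ℝ (2 * r : ℕ) u t)
    (ξ : Fin (r + 1) → ℝ) (j : Fin (r + 1)) :
    (hankelMat r (fun k : Fin (2 * r + 1) => iteratedDeriv (k : ℕ) u t)).mulVec ξ j =
      iteratedDeriv j (fun s => ∑ i, ξ i * iteratedDeriv (i : ℕ) u s) t := by
  have hsmooth (i : Fin (r + 1)) :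
      ContDiffAt ℝ (j : ℕ) (fun s => ξ i * iteratedDeriv (i : ℕ) u s) t :=
    contDiffAt_const.mul <| contDiffAt_iteratedDeriv hu <| by
      exact_mod_cast (by omega : (j : ℕ) + i ≤ 2 * r)
  rw [Matrix.mulVec, dotProduct, iteratedDeriv_fun_sum fun i _ => hsmooth i]
  refine Finset.sum_congr rfl fun i _ => ?_
  rw [iteratedDeriv_const_mul_field, iteratedDeriv_iteratedDeriv, mul_comm, hankelMat]

theorem eq_zero_of_sum_mul_iteratedDeriv_eventuallyEq_zero (hu : ContDiffAt ℝ (2 * r : ℕ) u t)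
    (hexc : DifferentiallyExcitingAt r u t) {ξ : Fin (r + 1) → ℝ}
    (hξ : ∀ᶠ s in 𝓝[>] t, ∑ i, ξ i * iteratedDeriv (i : ℕ) u s = 0) : ξ = 0 := by
  refine Matrix.eq_zero_of_mulVec_eq_zero hexc.ne_zero (funext fun j => ?_)
  have hsmooth := (contDiffAt_sum_mul_iteratedDeriv hu ξ).of_le (Nat.cast_le.mpr j.is_le)
  rw [hankelMat_mulVec_eq_iteratedDeriv_sum hu,
    iteratedDeriv_eq_of_eventuallyEq_nhdsGT hsmooth contDiffAt_const hξ,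
    iteratedDeriv_fun_const_zero, Pi.zero_apply]

theorem eq_zero_of_sum_mul_iteratedDeriv_ae_eq_zero (hu : ContDiffAt ℝ (2 * r : ℕ) u t)
    (hexc : DifferentiallyExcitingAt r u t) (htb : t < b) {ξ : Fin (r + 1) → ℝ}
    (hξ : ∀ᵐ s ∂volume.restrict (Ioc t b), ∑ i, ξ i * iteratedDeriv (i : ℕ) u s = 0) :
    ξ = 0 := by
  have hcont : ∀ᶠ s in 𝓝 t, ContinuousAt (fun s => ∑ i, ξ i * iteratedDeriv (i : ℕ) u s) s :=
    ((contDiffAt_sum_mul_iteratedDeriv hu ξ).eventually (by simp)).mono fun _ hs => hs.continuousAt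
  exact eq_zero_of_sum_mul_iteratedDeriv_eventuallyEq_zero hu hexc <|
    eventuallyEq_nhdsGT_of_ae_eq_restrict_Ioc htb (hcont.filter_mono nhdsWithin_le_nhds)
      (Eventually.of_forall fun _ => continuousAt_const) hξ

theorem differential_excitation_implies_persistent_excitation_general
    (hu : ContDiffAt ℝ (2 * r : ℕ) u t) (hexc : DifferentiallyExcitingAt r u t) (htb : t < b)
    (hL2 : ∀ i : Fin (r + 1), MemLp (iteratedDeriv (i : ℕ) u) 2 (volume.restrict (Ioc t b))) :
    ∃ ρ > (0 : ℝ), ∀ ξ : Fin (r + 1) → ℝ,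
      ρ * ∑ i, ξ i ^ 2 ≤ ∫ s in t..b, (∑ i, ξ i * iteratedDeriv (i : ℕ) u s) ^ 2 := by
  obtain ⟨ρ, hρ, hle⟩ := exists_pos_mul_sum_norm_sq_le_integral_norm_sq hL2
    fun (_ : Fin (r + 1) → ℝ) => eq_zero_of_sum_mul_iteratedDeriv_ae_eq_zero hu hexc htb
  refine ⟨ρ, hρ, fun ξ => ?_⟩
  simpa only [intervalIntegral.integral_of_le htb.le, Real.norm_eq_abs, sq_abs, smul_eq_mul]
    using hle ξ

end Excitation

/-- Proposition 3, differential excitation implies persistent excitation.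
If `u` is `C^{2r}` and the Hankel matrix `𝔐_r(ū^{(2r)}(t))` is invertible, then there are
`ε > 0` and `ρ > 0` with `∫_t^{t+ε} ū^{(r)}(s) (ū^{(r)}(s))ᵀ ds ⪰ ρ I_{r+1}`. -/
theorem differential_excitation_implies_persistent_excitation
    (r : ℕ) (hr : 0 < r) (u : ℝ → ℝ) (hu : ContDiff ℝ (2 * r : ℕ) u) (t : ℝ)
    (hexc : IsUnit (hankelMat r (fun i : Fin (2 * r + 1) =>
      iteratedDeriv (i : ℕ) u t)).det) :
    ∃ ε > (0 : ℝ), ∃ ρ > (0 : ℝ), ∀ ξ : Fin (r + 1) → ℝ,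
      (∫ s in t..(t + ε), (∑ i, ξ i * iteratedDeriv (i : ℕ) u s) ^ 2)
        ≥ ρ * ∑ i, (ξ i) ^ 2 := by
  exact ⟨1, one_pos, differential_excitation_implies_persistent_excitation_general hu.contDiffAt
    hexc (lt_add_one t) fun i =>
      memLp_iteratedDeriv_restrict_Ioc hu (by exact_mod_cast (by omega : (i : ℕ) ≤ 2 * r)) 2 t _⟩
end

section
/- Uniform differential injectivity for the canonical form (Proposition 4). Let C_x ⊂ R^n be a bounded open set and C_θ ⊂ R^{2n} a bounded open set such that for all θ = (θ_a, θ_b) in Cl(C_θ) the pair (A(θ_a), B(θ_b)) is controllable (Kalman rank condition: the matrix [B(θ_b), A(θ_a)B(θ_b), …, A(θ_a)^{n−1}B(θ_b)] has rank n). Let U_{4n} be a compact subset of R^{4n−1} such that for every v = (v_0, …, v_{4n−2}) ∈ U_{4n} the 2n×2n Hankel matrix 𝔐_{2n−1}(v) is invertible. Then there exists L_𝓗 > 0 such that for all (x,θ), (x*,θ*) ∈ Cl(C_x) × Cl(C_θ) and all v ∈ U_{4n}: |𝓗_{4n−1}(x*,θ*,v) − 𝓗_{4n−1}(x,θ,v)|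 ≥ L_𝓗 |(x−x*, θ−θ*)|. -/
open scoped Matrix BigOperators

/-- The first basis row vector `e₁ᵀ = (1, 0, …, 0)`. -/
def e1 (n : ℕ) : Fin n → ℝ := fun j => if (j : ℕ) = 0 then 1 else 0

/-- Canonical SISO form : `A(θ_a)` has first column `−θ_a` and entries `(i, i+1)` equal
to `1`, all other entries `0`. -/
def Acan (n : ℕ) (θa : Fin n → ℝ) : Matrix (Fin n) (Fin n) ℝ :=
  fun i j => if (j : ℕ) = 0 then -θa i else if (j : ℕ) = (i : ℕ) + 1 then 1 else 0

/-- `H_r(θ)` : the `r × n` matrix stacking the rows `C A(θ_a)^{j-1}`, `j = 1,…,r`,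
with `C = e₁ᵀ`. -/
def Hcan (n r : ℕ) (θa : Fin n → ℝ) : Matrix (Fin r) (Fin n) ℝ :=
  fun j => Matrix.vecMul (e1 n) (Acan n θa ^ (j : ℕ))

/-- `𝓗_r(x, θ, v) = H_r(θ) x + Σ_{j=1}^{r−1} S^j H_r(θ) B(θ_b) v_{j−1}` for the
canonical form (`B(θ_b) = θ_b`). -/
def HHcan (n r : ℕ) (x θa θb : Fin n → ℝ) (v : Fin (r - 1) → ℝ) : Fin r → ℝ :=
  Hcan n r θa *ᵥ x
    + ∑ j : Fin (r - 1), v j • ((shiftMat r ^ ((j : ℕ) + 1)) *ᵥ (Hcan n r θa *ᵥ θb))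

/-- The `a × a` Hankel matrix of a vector `v ∈ ℝ^b` : entry `(i,j)` is `v_{i+j}`. -/
def hankelOf (a b : ℕ) (v : Fin b → ℝ) : Matrix (Fin a) (Fin a) ℝ :=
  fun i j => if h : (i : ℕ) + (j : ℕ) < b then v ⟨(i : ℕ) + (j : ℕ), h⟩ else 0

/-- The Kalman controllability matrix `[B, A B, …, A^{n−1} B]` of the canonical pair. -/
def ctrbMat (n : ℕ) (θa θb : Fin n → ℝ) : Matrix (Fin n) (Fin n) ℝ :=
  fun i j => ((Acan n θa ^ (j : ℕ)) *ᵥ θb) i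

/-!
Write `y`, `y'` for the outputs of the two systems driven by the same input `v`. The difference of
two trajectories is itself a trajectory of the first system, with an input linear in
`(θ_b' - θ_b, θ_a' - θ_a)`, so `𝓗(x', θ', v) - 𝓗(x, θ, v)` is a continuous family, linear in the
parameter increment; by compactness it is enough to see that each member of the family is injective.

In terms of the shift `σ` on sequences, the canonical form reads `α(σ) y = β(σ) v` with
`α = X^n + ∑ θ_a,i X^(n-1-i)` and `β = ∑ θ_b,i X^(n-1-i)`. A deviation `η` satisfies
`α(σ) η = δβ(σ) v - δα(σ) y'`, and eliminating `y'` gives `(α' δβ - δα β')(σ) v = (α' α)(σ) η`.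
If `η` vanishes on `0, …, 4n-1`, then the right-hand side vanishes on `0, …, 2n-1`, and the
invertible Hankel matrix forces `α' δβ = δα β'`. Controllability of the second system means that
`α'` and `β'` are coprime, so `δα = δβ = 0` by degree, and then observability kills the increment
of the initial state.
-/

open Polynomial

section UniformLowerBound

variable {T E F : Type*} [TopologicalSpace T] [NormedAddCommGroup E] [NormedSpace ℝ E]
  [ProperSpace E] [NormedAddCommGroup F] [NormedSpace ℝ F]

theorem exists_pos_forall_mul_norm_le_norm_of_isCompact {K : Set T} (hK : IsCompact K)
    {f : T → E → F} (hf : Continuous fun p : T × E => f p.1 p.2)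
    (hsmul : ∀ t (c : ℝ) z, f t (c • z) = c • f t z) (hker : ∀ t ∈ K, ∀ z, f t z = 0 → z = 0) :
    ∃ L > (0 : ℝ), ∀ t ∈ K, ∀ z, L * ‖z‖ ≤ ‖f t z‖ := by
  have hpos : ∀ p ∈ K ×ˢ Metric.sphere (0 : E) 1, 0 < ‖f p.1 p.2‖ := by
    rintro ⟨t, z⟩ ⟨ht, hz⟩
    refine norm_pos_iff.2 fun h => ?_
    simp [hker t ht z h] at hz
  obtain ⟨L, hL, hmin⟩ :=
    (hK.prod (isCompact_sphere 0 1)).exists_forall_le' hf.norm.continuousOn hpos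
  refine ⟨L, hL, fun t ht z => ?_⟩
  rcases eq_or_ne z 0 with rfl | hz
  · simp
  have hunit : L ≤ ‖f t (‖z‖⁻¹ • z)‖ :=
    hmin (t, ‖z‖⁻¹ • z) ⟨ht, mem_sphere_zero_iff_norm.2 (norm_smul_inv_norm (𝕜 := ℝ) hz)⟩
  rwa [hsmul, norm_smul, norm_inv, norm_norm, inv_mul_eq_div,
    le_div_iff₀ (norm_pos_iff.2 hz)] at hunit

end UniformLowerBound

section ZeroExtend

variable {R : Type*} [Zero R] {m : ℕ}

/-- The sequence `v_0, …, v_{m-1}, 0, 0, …`: a finite vector, extended by zero so that it can be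
indexed without bounds. -/
def zeroExtend (v : Fin m → R) (k : ℕ) : R := if h : k < m then v ⟨k, h⟩ else 0

@[simp]
theorem zeroExtend_val (v : Fin m → R) (i : Fin m) : zeroExtend v i = v i := by
  simp [zeroExtend]

theorem zeroExtend_of_le (v : Fin m → R) {k : ℕ} (h : m ≤ k) : zeroExtend v k = 0 :=
  dif_neg h.not_gt

@[fun_prop]
theorem continuous_zeroExtend [TopologicalSpace R] (k : ℕ) :
    Continuous fun v : Fin m → R => zeroExtend v k := by
  unfold zeroExtend
  split_ifs <;> fun_prop

end ZeroExtend

section StateSeq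

variable {R ι : Type*} [Fintype ι]

/-- The state trajectory of the forced linear system `x(k+1) = A x(k) + w(k)`, `x(0) = x`. -/
def stateSeq [NonUnitalNonAssocSemiring R] (A : Matrix ι ι R) (w : ℕ → ι → R) (x : ι → R) :
    ℕ → ι → R
  | 0 => x
  | k + 1 => A *ᵥ stateSeq A w x k + w k

theorem stateSeq_eq_pow_mulVec_add_sum [Semiring R] [DecidableEq ι] (A : Matrix ι ι R)
    (w : ℕ → ι → R) (x : ι → R) (k : ℕ) :
    stateSeq A w x k = A ^ k *ᵥ x + ∑ j ∈ Finset.range k, A ^ (k - 1 - j) *ᵥ w j := by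
  induction k with
  | zero => simp [stateSeq]
  | succ k ih =>
    have hsum : A *ᵥ ∑ j ∈ Finset.range k, A ^ (k - 1 - j) *ᵥ w j =
        ∑ j ∈ Finset.range k, A ^ (k - j) *ᵥ w j := by
      rw [Matrix.mulVec_sum]
      refine Finset.sum_congr rfl fun j hj => ?_
      rw [Matrix.mulVec_mulVec, ← pow_succ']
      congr 2
      grind
    rw [stateSeq, ih, Matrix.mulVec_add, Matrix.mulVec_mulVec, ← pow_succ', hsum,
      Finset.sum_range_succ, add_assoc]
    simp

theorem stateSeq_smul [CommSemiring R] (A : Matrix ι ι R) (c : R) (w : ℕ → ι → R) (x : ι → R)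
    (k : ℕ) : stateSeq A (fun j => c • w j) (c • x) k = c • stateSeq A w x k := by
  induction k with
  | zero => rfl
  | succ k ih => rw [stateSeq, ih, stateSeq, Matrix.mulVec_smul, smul_add]

theorem stateSeq_sub_stateSeq [NonUnitalNonAssocRing R] (A A' : Matrix ι ι R)
    (w w' : ℕ → ι → R) (x x' : ι → R) (k : ℕ) :
    stateSeq A' w' x' k - stateSeq A w x k =
      stateSeq A (fun j => (A' - A) *ᵥ stateSeq A' w' x' j + (w' j - w j)) (x' - x) k := by
  induction k with
  | zero => rfl
  | succ k ih =>
    rw [stateSeq, stateSeq, stateSeq, ← ih, Matrix.mulVec_sub, Matrix.sub_mulVec]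
    abel

theorem continuous_stateSeq [NonUnitalNonAssocSemiring R] [TopologicalSpace R]
    [IsTopologicalSemiring R] {T : Type*} [TopologicalSpace T] {A : T → Matrix ι ι R}
    {w : T → ℕ → ι → R} {x : T → ι → R} (hA : Continuous A)
    (hw : ∀ k, Continuous fun t => w t k) (hx : Continuous x) (k : ℕ) :
    Continuous fun t => stateSeq (A t) (w t) (x t) k := by
  induction k with
  | zero => exact hx
  | succ k ih => exact (hA.matrix_mulVec ih).add (hw k)

end StateSeq

section SeqShift

variable {R : Type*} [CommSemiring R]

/-- The shift `(σ s) k = s (k + 1)` on sequences. A polynomial `p` acts on sequences as the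
difference operator `aeval seqShift p`. -/
def seqShift : Module.End R (ℕ → R) := LinearMap.funLeft R R Nat.succ

theorem seqShift_pow_apply (m : ℕ) (s : ℕ → R) (k : ℕ) : (seqShift ^ m) s k = s (k + m) := by
  induction m generalizing k with
  | zero => rfl
  | succ m ih =>
    rw [pow_succ', Module.End.mul_apply]
    exact (ih (k + 1)).trans (congrArg s (by ring))

theorem aeval_seqShift_apply {p : R[X]} {N : ℕ} (hp : p.degree < N) (s : ℕ → R) (k : ℕ) :
    aeval seqShift p s k = ∑ i : Fin N, p.coeff i * s (k + i) := by
  rw [aeval_def, eval₂_eq_sum, ← sum_fin _ (by simp) hp, LinearMap.sum_apply, Finset.sum_apply]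
  simp [seqShift_pow_apply, ← Algebra.smul_def]

end SeqShift

section VecPoly

variable {R : Type*} [CommSemiring R] {n : ℕ}

/-- The polynomial `∑ u_i X^(n-1-i)` attached to a coefficient vector `u`, highest degree first,
as dictated by the canonical form. -/
noncomputable def vecPoly : (Fin n → R) →ₗ[R] R[X] :=
  (degreeLT R n).subtype ∘ₗ (degreeLTEquiv R n).symm.toLinearMap ∘ₗ LinearMap.funLeft R R Fin.rev

theorem vecPoly_apply (u : Fin n → R) : vecPoly u = ∑ i, C (u i) * X ^ (i.rev : ℕ) := by
  simp only [C_mul_X_pow_eq_monomial]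
  exact (Equiv.sum_comp Fin.revPerm fun i => monomial (i : ℕ) (u i.rev)).symm.trans
    (by simp)

theorem degree_vecPoly_lt (u : Fin n → R) : (vecPoly u).degree < n :=
  mem_degreeLT.1 (Subtype.coe_prop _)

theorem vecPoly_injective : Function.Injective (vecPoly : (Fin n → R) →ₗ[R] R[X]) :=
  Subtype.val_injective.comp <| (degreeLTEquiv R n).symm.injective.comp <|
    LinearMap.funLeft_injective_of_surjective R R _ Fin.rev_surjective

theorem aeval_seqShift_vecPoly (u : Fin n → R) (s : ℕ → R) :
    aeval seqShift (vecPoly u) s = ∑ i, u i • (seqShift ^ (i.rev : ℕ)) s := by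
  simp [vecPoly_apply]

theorem X_mul_vecPoly (u : Fin n → R) :
    X * vecPoly u = C (zeroExtend u 0) * X ^ n + vecPoly fun i : Fin n => zeroExtend u (i + 1) := by
  cases n with
  | zero => simp [vecPoly_apply, zeroExtend]
  | succ n =>
    rw [vecPoly_apply, vecPoly_apply, Fin.sum_univ_succ, Fin.sum_univ_castSucc, mul_add,
      Finset.mul_sum]
    have hlast : zeroExtend u (n + 1) = 0 := zeroExtend_of_le u le_rfl
    have hmid : ∀ i : Fin n, zeroExtend u (i + 1) = u i.succ := fun i => zeroExtend_val u i.succ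
    simp only [Fin.rev_zero, Fin.rev_succ, Fin.rev_castSucc, Fin.val_castSucc, Fin.val_succ,
      Fin.val_last, hlast, hmid, C_0, zero_mul, add_zero, pow_succ]
    congr 1
    · rw [show zeroExtend u 0 = u 0 from zeroExtend_val u 0]
      ring
    · exact Finset.sum_congr rfl fun i _ => by ring

theorem eq_zero_of_isCoprime_of_mul_eq_mul [NoZeroDivisors R] {p q r s : R[X]}
    (hpq : IsCoprime p q) (hr : r.degree < p.degree) (h : p * s = r * q) : r = 0 ∧ s = 0 := by
  have hr0 : r = 0 :=
    eq_zero_of_dvd_of_degree_lt (hpq.dvd_of_dvd_mul_right ⟨s, h.symm⟩) hr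
  rw [hr0, zero_mul] at h
  exact ⟨hr0, (mul_eq_zero.1 h).resolve_left (ne_zero_of_degree_gt hr)⟩

end VecPoly

section CanonicalForm

variable {n : ℕ}

theorem e1_dotProduct (u : Fin n → ℝ) : e1 n ⬝ᵥ u = zeroExtend u 0 := by
  cases n with
  | zero => simp [zeroExtend]
  | succ n => simp [dotProduct, e1, zeroExtend]

theorem Acan_mulVec (a u : Fin n → ℝ) :
    Acan n a *ᵥ u = (fun i : Fin n => zeroExtend u (i + 1)) - (e1 n ⬝ᵥ u) • a := by
  cases n with
  | zero => exact Subsingleton.elim _ _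
  | succ n =>
    funext i
    have hsuper : ∑ j : Fin n, (if (j : ℕ) = i then 1 else 0) * u j.succ =
        zeroExtend u (i + 1) := by
      refine i.lastCases ?_ fun i => ?_
      · rw [Fin.val_last, zeroExtend_of_le u le_rfl]
        exact Finset.sum_eq_zero fun j _ => by simp [j.is_lt.ne]
      · simpa [Fin.val_inj] using (zeroExtend_val u i.succ).symm
    simp only [Matrix.mulVec, dotProduct, Acan, Fin.val_eq_zero_iff, ite_mul, neg_mul, one_mul,
      zero_mul, Fin.sum_univ_succ, ↓reduceIte, Fin.succ_ne_zero, Fin.val_succ,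
      Nat.add_right_cancel_iff, e1, Finset.sum_ite_eq', Finset.mem_univ, Pi.sub_apply, ← hsuper,
      Pi.smul_apply, smul_eq_mul]
    ring

theorem Acan_sub_mulVec (a a' u : Fin n → ℝ) :
    (Acan n a' - Acan n a) *ᵥ u = -((e1 n ⬝ᵥ u) • (a' - a)) := by
  rw [Matrix.sub_mulVec, Acan_mulVec, Acan_mulVec, smul_sub]
  abel

@[fun_prop]
theorem continuous_Acan : Continuous (Acan n) := by
  refine continuous_matrix fun i j => ?_
  unfold Acan
  split_ifs <;> fun_prop

/-- The denominator `X^n + ∑ a_i X^(n-1-i)` of the transfer function of the canonical form, which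
is the characteristic polynomial of `A(a)`; the numerator is `vecPoly b`. -/
noncomputable def denPoly (a : Fin n → ℝ) : ℝ[X] := X ^ n + vecPoly a

theorem degree_denPoly (a : Fin n → ℝ) : (denPoly a).degree = n := by
  rw [denPoly, degree_add_eq_left_of_degree_lt] <;> simp [degree_vecPoly_lt]

theorem vecPoly_Acan_mulVec (a u : Fin n → ℝ) :
    vecPoly (Acan n a *ᵥ u) = X * vecPoly u - C (e1 n ⬝ᵥ u) * denPoly a := by
  rw [Acan_mulVec, map_sub, map_smul, X_mul_vecPoly, denPoly, e1_dotProduct, smul_eq_C_mul]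
  ring

theorem denPoly_dvd_X_pow_mul_vecPoly_sub (a b : Fin n → ℝ) (k : ℕ) :
    denPoly a ∣ X ^ k * vecPoly b - vecPoly (Acan n a ^ k *ᵥ b) := by
  induction k with
  | zero => simp
  | succ k ih =>
    obtain ⟨q, hq⟩ := ih
    refine ⟨X * q + C (e1 n ⬝ᵥ Acan n a ^ k *ᵥ b), ?_⟩
    rw [pow_succ' (Acan n a), ← Matrix.mulVec_mulVec, vecPoly_Acan_mulVec, pow_succ']
    linear_combination X * hq

theorem ctrbMat_mulVec (a b c : Fin n → ℝ) :
    ctrbMat n a b *ᵥ c = ∑ k : Fin n, c k • (Acan n a ^ (k : ℕ) *ᵥ b) := by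
  funext i
  simp [Matrix.mulVec, dotProduct, ctrbMat, mul_comm]

-- Modulo `denPoly a`, multiplication by `X` is `A(a)`, so a solution `c` of
-- `∑ c_k A^k b = (0, …, 0, 1)`, whose polynomial is `1`, makes `∑ c_k X^k` an inverse of
-- `vecPoly b`.
theorem isCoprime_denPoly_vecPoly {a b : Fin n → ℝ} (h : (ctrbMat n a b).rank = n) :
    IsCoprime (denPoly a) (vecPoly b) := by
  cases n with
  | zero => simpa [denPoly, vecPoly_apply] using isCoprime_one_left
  | succ n =>
    have hrange : LinearMap.range (ctrbMat (n + 1) a b).mulVecLin = ⊤ :=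
      Submodule.eq_top_of_finrank_eq (h.trans (by simp))
    obtain ⟨c, hc⟩ := LinearMap.range_eq_top.1 hrange (Pi.single (Fin.last n) 1)
    have hone : ∑ k : Fin (n + 1), C (c k) * vecPoly (Acan (n + 1) a ^ (k : ℕ) *ᵥ b) = 1 := by
      have hlast : vecPoly (Pi.single (Fin.last n) (1 : ℝ)) = 1 := by
        simp [vecPoly_apply, Pi.single_apply]
      rw [← hlast, ← hc, Matrix.mulVecLin_apply, ctrbMat_mulVec, map_sum]
      simp only [map_smul, smul_eq_C_mul]
    obtain ⟨q, hq⟩ : denPoly a ∣ (∑ k : Fin (n + 1), C (c k) * X ^ (k : ℕ)) * vecPoly b - 1 := by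
      rw [← hone, Finset.sum_mul, ← Finset.sum_sub_distrib]
      refine Finset.dvd_sum fun k _ => ?_
      rw [mul_assoc, ← mul_sub]
      exact (denPoly_dvd_X_pow_mul_vecPoly_sub a b k).mul_left _
    exact ⟨-q, ∑ k : Fin (n + 1), C (c k) * X ^ (k : ℕ), by linear_combination hq⟩

end CanonicalForm

section OutputSeq

variable {n : ℕ}

/-- The output `y(k) = C x(k)` of the canonical form driven by `x(k+1) = A(a) x(k) + w(k)`,
`x(0) = x`. The usual input channel is the case `w(k) = v(k) b`. -/
def outputSeq (a : Fin n → ℝ) (w : ℕ → Fin n → ℝ) (x : Fin n → ℝ) (k : ℕ) : ℝ :=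
  e1 n ⬝ᵥ stateSeq (Acan n a) w x k

theorem continuous_outputSeq {T : Type*} [TopologicalSpace T] {a x : T → Fin n → ℝ}
    {w : T → ℕ → Fin n → ℝ} (ha : Continuous a) (hw : ∀ k, Continuous fun t => w t k)
    (hx : Continuous x) (k : ℕ) : Continuous fun t => outputSeq (a t) (w t) (x t) k :=
  continuous_const.dotProduct (continuous_stateSeq (continuous_Acan.comp ha) hw hx k)

theorem zeroExtend_stateSeq_Acan_succ (a : Fin n → ℝ) (w : ℕ → Fin n → ℝ) (x : Fin n → ℝ)
    {m : ℕ} (hm : m < n) (k : ℕ) :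
    zeroExtend (stateSeq (Acan n a) w x k) (m + 1) =
      zeroExtend (stateSeq (Acan n a) w x (k + 1)) m + zeroExtend a m * outputSeq a w x k
        - zeroExtend (w k) m := by
  have hstep : stateSeq (Acan n a) w x (k + 1) = _ + w k :=
    congrArg (· + w k) (Acan_mulVec a (stateSeq (Acan n a) w x k))
  simp only [hstep, outputSeq, zeroExtend, hm, dif_pos, Pi.add_apply, Pi.sub_apply, Pi.smul_apply,
    smul_eq_mul]
  ring

-- Horner's scheme for `denPoly a`: its first `m` steps express the `m`-th state component.
theorem zeroExtend_stateSeq_Acan (a : Fin n → ℝ) (w : ℕ → Fin n → ℝ) (x : Fin n → ℝ)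
    {m : ℕ} (hm : m ≤ n) :
    (fun k => zeroExtend (stateSeq (Acan n a) w x k) m) =
      (seqShift ^ m) (outputSeq a w x) + ∑ i ∈ Finset.range m, (seqShift ^ (m - 1 - i))
        (zeroExtend a i • outputSeq a w x - fun k => zeroExtend (w k) i) := by
  induction m with
  | zero =>
    funext k
    simp [outputSeq, e1_dotProduct]
  | succ m ih =>
    have hstep : (fun k => zeroExtend (stateSeq (Acan n a) w x k) (m + 1)) =
        seqShift (fun k => zeroExtend (stateSeq (Acan n a) w x k) m) +
          (zeroExtend a m • outputSeq a w x - fun k => zeroExtend (w k) m) := by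
      funext k
      rw [zeroExtend_stateSeq_Acan_succ a w x hm, add_sub_assoc]
      rfl
    rw [hstep, ih (Nat.le_of_succ_le hm), map_add, ← Module.End.mul_apply, ← pow_succ', map_sum,
      Finset.sum_range_succ, add_assoc]
    congr 2
    · refine Finset.sum_congr rfl fun i hi => ?_
      rw [← Module.End.mul_apply, ← pow_succ',
        show m - 1 - i + 1 = m + 1 - 1 - i by grind]
    · simp

theorem aeval_denPoly_outputSeq (a : Fin n → ℝ) (w : ℕ → Fin n → ℝ) (x : Fin n → ℝ) :
    aeval seqShift (denPoly a) (outputSeq a w x) =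
      ∑ i : Fin n, (seqShift ^ (i.rev : ℕ)) fun k => w k i := by
  have hzero : (fun k => zeroExtend (stateSeq (Acan n a) w x k) n) = 0 :=
    funext fun k => zeroExtend_of_le _ le_rfl
  rw [zeroExtend_stateSeq_Acan a w x le_rfl, ← Fin.sum_univ_eq_sum_range fun i =>
    (seqShift ^ (n - 1 - i)) (zeroExtend a i • outputSeq a w x - fun k => zeroExtend (w k) i)]
    at hzero
  simp only [zeroExtend_val, map_sub, map_smul, Finset.sum_sub_distrib, ← add_sub_assoc,
    sub_eq_zero] at hzero
  simp only [denPoly, map_add, LinearMap.add_apply, aeval_seqShift_vecPoly, map_pow, aeval_X,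
    Fin.val_rev, add_comm _ 1, ← Nat.sub_sub, hzero]

theorem sum_seqShift_pow_smul (u : Fin n → ℝ) (s : ℕ → ℝ) :
    (∑ i : Fin n, (seqShift ^ (i.rev : ℕ)) fun k => (s k • u) i) =
      aeval seqShift (vecPoly u) s := by
  funext k
  simp [aeval_seqShift_vecPoly, seqShift_pow_apply, mul_comm]

theorem eq_zero_of_outputSeq_zero_eq_zero {a x : Fin n → ℝ}
    (h : ∀ k < n, outputSeq a 0 x k = 0) : x = 0 := by
  funext i
  have hi := congrFun (zeroExtend_stateSeq_Acan a 0 x i.is_lt.le) 0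
  have hz : ∀ j, zeroExtend (0 : Fin n → ℝ) j = 0 := by simp [zeroExtend]
  rw [Pi.add_apply, seqShift_pow_apply, Finset.sum_apply, Finset.sum_eq_zero, zero_add,
    h i i.is_lt, add_zero] at hi
  · simpa [stateSeq] using hi
  · intro j _
    simp [seqShift_pow_apply, hz, h (i - 1 - j) (by omega)]

end OutputSeq

section Observation

variable {n r : ℕ}

theorem shiftMat_pow_mulVec (m : ℕ) (s : ℕ → ℝ) (i : Fin r) :
    ((shiftMat r ^ m) *ᵥ fun j => s j) i = if m ≤ i then s (i - m) else 0 := by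
  induction m generalizing i with
  | zero => simp
  | succ m ih =>
    rw [pow_succ', ← Matrix.mulVec_mulVec, Matrix.mulVec, dotProduct]
    simp only [ih, shiftMat]
    split_ifs with hi
    · rw [Finset.sum_eq_single (⟨i - 1, by omega⟩ : Fin r)]
      · grind
      · grind
      · grind
    · exact Finset.sum_eq_zero fun j _ => by grind

theorem Hcan_mulVec (a u : Fin n → ℝ) :
    Hcan n r a *ᵥ u = fun i : Fin r => e1 n ⬝ᵥ (Acan n a ^ (i : ℕ) *ᵥ u) :=
  funext fun _ => (Matrix.dotProduct_mulVec _ _ _).symm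

theorem sum_mul_shiftMat_pow_mulVec (v : Fin (r - 1) → ℝ) (s : ℕ → ℝ) (i : Fin r) :
    ∑ j : Fin (r - 1), v j * ((shiftMat r ^ ((j : ℕ) + 1)) *ᵥ fun k => s k) i =
      ∑ j ∈ Finset.range i, zeroExtend v j * s (i - 1 - j) := by
  have hterm : ∀ j : Fin (r - 1), v j * ((shiftMat r ^ ((j : ℕ) + 1)) *ᵥ fun k => s k) i =
      if (j : ℕ) < i then zeroExtend v j * s (i - 1 - j) else 0 := fun j => by
    rw [shiftMat_pow_mulVec, zeroExtend_val, Nat.sub_sub, add_comm 1, mul_ite, mul_zero]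
    rfl
  rw [Finset.sum_congr rfl fun j _ => hterm j, Fin.sum_univ_eq_sum_range fun j =>
    if j < i then zeroExtend v j * s (i - 1 - j) else 0, ← Finset.sum_filter]
  exact Finset.sum_congr (by grind) fun _ _ => rfl

theorem HHcan_apply (x a b : Fin n → ℝ) (v : Fin (r - 1) → ℝ) (i : Fin r) :
    HHcan n r x a b v i = outputSeq a (fun k => zeroExtend v k • b) x i := by
  simp only [HHcan, Pi.add_apply, Finset.sum_apply, Pi.smul_apply, smul_eq_mul, Hcan_mulVec,
    sum_mul_shiftMat_pow_mulVec v fun k => e1 n ⬝ᵥ (Acan n a ^ k *ᵥ b), outputSeq,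
    stateSeq_eq_pow_mulVec_add_sum, dotProduct_add, dotProduct_sum, Matrix.mulVec_smul,
    dotProduct_smul]

end Observation

section Hankel

theorem eq_zero_of_isUnit_det_hankelOf {N m : ℕ} {v : Fin m → ℝ}
    (hv : IsUnit (hankelOf N m v).det) {p : ℝ[X]} (hp : p.degree < N)
    (h : ∀ k < N, aeval seqShift p (zeroExtend v) k = 0) : p = 0 := by
  have hmul : hankelOf N m v *ᵥ (fun i => p.coeff i) = 0 := by
    funext k
    rw [Pi.zero_apply, ← h k k.is_lt, aeval_seqShift_apply hp]
    simp only [Matrix.mulVec, dotProduct, hankelOf, zeroExtend, mul_comm]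
  exact (degreeLTEquiv_eq_zero_iff_eq_zero (mem_degreeLT.2 hp)).1
    (Matrix.eq_zero_of_mulVec_eq_zero hv.ne_zero hmul)

end Hankel

section OutputDeviation

variable {n : ℕ}

/-- The output of the system governing the difference of two trajectories of the canonical form:
`y` is the output of the second system, `v` the common input, and `δx`, `δa`, `δb` are the
increments of initial state and parameters (second minus first system). It is exactly linear in
the increments because the products of increments are absorbed by evaluating at `y`. -/
def outputDeviation (a : Fin n → ℝ) (y v : ℕ → ℝ) (δx δa δb : Fin n → ℝ) : ℕ → ℝ :=
  outputSeq a (fun k => v k • δb - y k • δa) δx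

theorem outputSeq_sub_outputSeq (a b x a' b' x' : Fin n → ℝ) (v : ℕ → ℝ) (k : ℕ) :
    outputSeq a' (fun j => v j • b') x' k - outputSeq a (fun j => v j • b) x k =
      outputDeviation a (outputSeq a' (fun j => v j • b') x') v (x' - x) (a' - a) (b' - b) k := by
  simp only [outputDeviation, outputSeq, ← dotProduct_sub, stateSeq_sub_stateSeq, Acan_sub_mulVec,
    ← smul_sub, neg_add_eq_sub]

theorem outputDeviation_smul (a : Fin n → ℝ) (y v : ℕ → ℝ) (c : ℝ) (δx δa δb : Fin n → ℝ) (k : ℕ) :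
    outputDeviation a y v (c • δx) (c • δa) (c • δb) k =
      c * outputDeviation a y v δx δa δb k := by
  rw [outputDeviation, outputDeviation, outputSeq, outputSeq, ← smul_eq_mul, ← dotProduct_smul,
    ← stateSeq_smul]
  simp only [smul_sub, smul_comm c]

theorem continuous_outputDeviation {T : Type*} [TopologicalSpace T] {a δx δa δb : T → Fin n → ℝ}
    {y v : T → ℕ → ℝ} (ha : Continuous a) (hy : ∀ k, Continuous fun t => y t k)
    (hv : ∀ k, Continuous fun t => v t k) (hδx : Continuous δx) (hδa : Continuous δa)
    (hδb : Continuous δb) (k : ℕ) :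
    Continuous fun t => outputDeviation (a t) (y t) (v t) (δx t) (δa t) (δb t) k :=
  continuous_outputSeq ha (fun k => ((hv k).smul hδb).sub ((hy k).smul hδa)) hδx k

theorem aeval_denPoly_outputDeviation (a : Fin n → ℝ) (y v : ℕ → ℝ) (δx δa δb : Fin n → ℝ) :
    aeval seqShift (denPoly a) (outputDeviation a y v δx δa δb) =
      aeval seqShift (vecPoly δb) v - aeval seqShift (vecPoly δa) y := by
  rw [outputDeviation, aeval_denPoly_outputSeq, ← sum_seqShift_pow_smul, ← sum_seqShift_pow_smul,
    ← Finset.sum_sub_distrib]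
  exact Finset.sum_congr rfl fun i _ => map_sub (seqShift ^ (i.rev : ℕ)) _ _

theorem aeval_denPoly_mul_outputDeviation {a a' b' : Fin n → ℝ} {y v : ℕ → ℝ}
    (hy : aeval seqShift (denPoly a') y = aeval seqShift (vecPoly b') v)
    (δx δa δb : Fin n → ℝ) :
    aeval seqShift (denPoly a' * denPoly a) (outputDeviation a y v δx δa δb) =
      aeval seqShift (denPoly a' * vecPoly δb - vecPoly δa * vecPoly b') v := by
  rw [map_mul, Module.End.mul_apply, aeval_denPoly_outputDeviation, map_sub, map_sub,
    LinearMap.sub_apply, map_mul _ (vecPoly δa), Module.End.mul_apply, ← hy,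
    ← Module.End.mul_apply, ← Module.End.mul_apply, ← Module.End.mul_apply, ← map_mul, ← map_mul,
    ← map_mul, mul_comm (vecPoly δa)]

theorem degree_denPoly_mul_vecPoly_sub_lt (a b c d : Fin n → ℝ) :
    (denPoly a * vecPoly b - vecPoly c * vecPoly d).degree < (2 * n : ℕ) := by
  have hmul : ∀ {p : ℝ[X]} (u : Fin n → ℝ), p.degree ≤ n → (p * vecPoly u).degree < (2 * n : ℕ) :=
    fun {p} u hp => by
      rw [degree_mul, two_mul, Nat.cast_add]
      calc p.degree + (vecPoly u).degree ≤ n + (vecPoly u).degree := by gcongr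
        _ < n + n := WithBot.add_lt_add_left (WithBot.natCast_ne_bot n) (degree_vecPoly_lt u)
  exact (degree_sub_le _ _).trans_lt
    (max_lt (hmul b (degree_denPoly a).le) (hmul d (degree_vecPoly_lt c).le))

theorem eq_zero_of_outputDeviation_eq_zero {m : ℕ} {a a' b' : Fin n → ℝ} {y : ℕ → ℝ}
    {v : Fin m → ℝ} (hctrb : (ctrbMat n a' b').rank = n)
    (hv : IsUnit (hankelOf (2 * n) m v).det)
    (hy : aeval seqShift (denPoly a') y = aeval seqShift (vecPoly b') (zeroExtend v))
    {δx δa δb : Fin n → ℝ}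
    (h : ∀ k < 4 * n, outputDeviation a y (zeroExtend v) δx δa δb k = 0) :
    δx = 0 ∧ δa = 0 ∧ δb = 0 := by
  have hvanish : ∀ k < 2 * n, aeval seqShift
      (denPoly a' * vecPoly δb - vecPoly δa * vecPoly b') (zeroExtend v) k = 0 := by
    intro k hk
    have hdeg : (denPoly a' * denPoly a).degree < (2 * n + 1 : ℕ) := by
      rw [degree_mul, degree_denPoly, degree_denPoly]
      exact_mod_cast (by omega : n + n < 2 * n + 1)
    rw [← aeval_denPoly_mul_outputDeviation hy δx, aeval_seqShift_apply hdeg]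
    exact Finset.sum_eq_zero fun i _ => by rw [h _ (by omega), mul_zero]
  have hmul : denPoly a' * vecPoly δb = vecPoly δa * vecPoly b' :=
    sub_eq_zero.1 (eq_zero_of_isUnit_det_hankelOf hv
      (degree_denPoly_mul_vecPoly_sub_lt a' δb δa b') hvanish)
  obtain ⟨hδa, hδb⟩ := eq_zero_of_isCoprime_of_mul_eq_mul (isCoprime_denPoly_vecPoly hctrb)
    (by simpa [degree_denPoly] using degree_vecPoly_lt δa) hmul
  obtain rfl := (map_eq_zero_iff _ vecPoly_injective).1 hδa
  obtain rfl := (map_eq_zero_iff _ vecPoly_injective).1 hδb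
  refine ⟨eq_zero_of_outputSeq_zero_eq_zero (a := a) fun k hk => ?_, rfl, rfl⟩
  simpa [outputDeviation, ← Pi.zero_def] using h k (by omega)

theorem eNorm_eq_norm {m : ℕ} (u : Fin m → ℝ) : eNorm u = ‖WithLp.toLp 2 u‖ := by
  simp [eNorm, EuclideanSpace.norm_eq]

/-- The first `r` samples of `outputDeviation` as a map between Euclidean spaces, for `y` the
output of the system `(a', b')` started at `x'`. The increments `δx`, `δa`, `δb` are stacked into
one vector, so that its norm is the Euclidean norm of `(x - x', θ - θ')`. -/
noncomputable def deviationMap {m : ℕ} (r : ℕ) (a x' a' b' : Fin n → ℝ) (v : Fin m → ℝ)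
    (z : EuclideanSpace ℝ (Fin n ⊕ Fin n ⊕ Fin n)) : EuclideanSpace ℝ (Fin r) :=
  WithLp.toLp 2 fun k => outputDeviation a (outputSeq a' (fun j => zeroExtend v j • b') x')
    (zeroExtend v) (fun i => z (.inl i)) (fun i => z (.inr (.inl i))) (fun i => z (.inr (.inr i))) k

theorem continuous_deviationMap {T : Type*} [TopologicalSpace T] {m : ℕ} (r : ℕ)
    {a x' a' b' : T → Fin n → ℝ} {v : T → Fin m → ℝ}
    {z : T → EuclideanSpace ℝ (Fin n ⊕ Fin n ⊕ Fin n)} (ha : Continuous a) (hx' : Continuous x')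
    (ha' : Continuous a') (hb' : Continuous b') (hv : Continuous v) (hz : Continuous z) :
    Continuous fun t => deviationMap r (a t) (x' t) (a' t) (b' t) (v t) (z t) := by
  have hv' : ∀ k, Continuous fun t => zeroExtend (v t) k := fun k => by fun_prop
  refine (PiLp.continuous_toLp 2 _).comp (continuous_pi fun k => ?_)
  exact continuous_outputDeviation ha
    (fun k => continuous_outputSeq ha' (fun j => (hv' j).smul hb') hx' k) hv'
    (by fun_prop) (by fun_prop) (by fun_prop) k

theorem deviationMap_smul {m : ℕ} (r : ℕ) (a x' a' b' : Fin n → ℝ) (v : Fin m → ℝ) (c : ℝ)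
    (z : EuclideanSpace ℝ (Fin n ⊕ Fin n ⊕ Fin n)) :
    deviationMap r a x' a' b' v (c • z) = c • deviationMap r a x' a' b' v z := by
  ext k
  exact outputDeviation_smul _ _ _ c _ _ _ k

theorem eq_zero_of_deviationMap_eq_zero {m : ℕ} {a x' a' b' : Fin n → ℝ} {v : Fin m → ℝ}
    (hctrb : (ctrbMat n a' b').rank = n) (hv : IsUnit (hankelOf (2 * n) m v).det)
    {z : EuclideanSpace ℝ (Fin n ⊕ Fin n ⊕ Fin n)}
    (h : deviationMap (4 * n) a x' a' b' v z = 0) : z = 0 := by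
  have hy := (aeval_denPoly_outputSeq a' (fun j => zeroExtend v j • b') x').trans
    (sum_seqShift_pow_smul b' (zeroExtend v))
  obtain ⟨hx, ha, hb⟩ := eq_zero_of_outputDeviation_eq_zero hctrb hv hy
    fun k hk => congrFun (congrArg WithLp.ofLp h) ⟨k, hk⟩
  ext (i | i | i)
  exacts [congrFun hx i, congrFun ha i, congrFun hb i]

theorem eNorm_HHcan_sub_HHcan {r : ℕ} (a b x a' b' x' : Fin n → ℝ) (v : Fin (r - 1) → ℝ) :
    eNorm (HHcan n r x' a' b' v - HHcan n r x a b v) =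
      ‖deviationMap r a x' a' b' v
        (WithLp.toLp 2 (Sum.elim (x' - x) (Sum.elim (a' - a) (b' - b))))‖ := by
  rw [eNorm_eq_norm]
  congr 2
  funext k
  rw [Pi.sub_apply, HHcan_apply, HHcan_apply, outputSeq_sub_outputSeq]
  rfl

end OutputDeviation

theorem uniform_differential_injectivity_canonical_general (n : ℕ)
    {Kx : Set (Fin n → ℝ)} (hKx : IsCompact Kx)
    {Kθ Kθ' : Set ((Fin n → ℝ) × (Fin n → ℝ))} (hKθ : IsCompact Kθ) (hKθ' : IsCompact Kθ')
    (hctrb : ∀ θ' ∈ Kθ', (ctrbMat n θ'.1 θ'.2).rank = n)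
    {U : Set (Fin (4 * n - 1) → ℝ)} (hUc : IsCompact U)
    (hU : ∀ v ∈ U, IsUnit (hankelOf (2 * n) (4 * n - 1) v).det) :
    ∃ LH > (0 : ℝ), ∀ x, ∀ x' ∈ Kx, ∀ θ ∈ Kθ, ∀ θ' ∈ Kθ', ∀ v ∈ U,
      eNorm (HHcan n (4 * n) x' θ'.1 θ'.2 v - HHcan n (4 * n) x θ.1 θ.2 v)
        ≥ LH * Real.sqrt (∑ i, (x i - x' i) ^ 2
            + (∑ j, (θ.1 j - θ'.1 j) ^ 2 + ∑ j, (θ.2 j - θ'.2 j) ^ 2)) := by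
  obtain ⟨L, hL, hbound⟩ := exists_pos_forall_mul_norm_le_norm_of_isCompact
    (f := fun t => deviationMap (4 * n) t.1.1 t.2.1 t.2.2.1.1 t.2.2.1.2 t.2.2.2)
    (hKθ.prod (hKx.prod (hKθ'.prod hUc)))
    (by apply continuous_deviationMap <;> fun_prop)
    (fun t => deviationMap_smul _ _ _ _ _ _)
    (fun t ⟨_, _, hθ', hv⟩ _ => eq_zero_of_deviationMap_eq_zero (hctrb _ hθ') (hU _ hv))
  refine ⟨L, hL, fun x x' hx' θ hθ θ' hθ' v hv => ?_⟩
  rw [eNorm_HHcan_sub_HHcan]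
  convert hbound (θ, x', θ', v) ⟨hθ, hx', hθ', hv⟩
    (WithLp.toLp 2 (Sum.elim (x' - x) (Sum.elim (θ'.1 - θ.1) (θ'.2 - θ.2)))) using 2
  simp [EuclideanSpace.norm_eq, sub_sq_comm (x _), sub_sq_comm (θ.1 _), sub_sq_comm (θ.2 _)]

/-- STATEMENT 9 (Proposition 4, uniform differential injectivity for the canonical
form), with `𝓗_{4n−1} = 𝓗` built from the `4n` rows `C A^j`, `j = 0,…,4n−1`, and
`v = (v_0,…,v_{4n−2}) ∈ ℝ^{4n−1}`. -/
theorem uniform_differential_injectivity_canonical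
    (n : ℕ) (hn : 0 < n)
    (Cx : Set (Fin n → ℝ)) (hCxo : IsOpen Cx) (hCxb : Bornology.IsBounded Cx)
    (Cθ : Set ((Fin n → ℝ) × (Fin n → ℝ)))
    (hCθo : IsOpen Cθ) (hCθb : Bornology.IsBounded Cθ)
    (hctrb : ∀ θ ∈ closure Cθ, (ctrbMat n θ.1 θ.2).rank = n)
    (U : Set (Fin (4 * n - 1) → ℝ)) (hUc : IsCompact U)
    (hU : ∀ v ∈ U, IsUnit (hankelOf (2 * n) (4 * n - 1) v).det) :
    ∃ LH > (0 : ℝ),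
      ∀ x ∈ closure Cx, ∀ x' ∈ closure Cx, ∀ θ ∈ closure Cθ, ∀ θ' ∈ closure Cθ,
      ∀ v ∈ U,
        eNorm (HHcan n (4 * n) x' θ'.1 θ'.2 v - HHcan n (4 * n) x θ.1 θ.2 v)
          ≥ LH * Real.sqrt (∑ i, (x i - x' i) ^ 2
              + (∑ j, (θ.1 j - θ'.1 j) ^ 2 + ∑ j, (θ.2 j - θ'.2 j) ^ 2)) := by
  obtain ⟨L, hL, hbound⟩ := uniform_differential_injectivity_canonical_general n
    hCxb.isCompact_closure hCθb.isCompact_closure hCθb.isCompact_closure hctrb hUc hU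
  exact ⟨L, hL, fun x _ => hbound x⟩
end
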